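/- Suppose d ∈ ℤ_pˣ is not a square in ℚ_p, and let β : ℕ → ℝ be determined by β(0) = 1, β(1) = λ/(q+1), and q·β(k+2) − λ·β(k+1) + β(k) = 0 for all k. Then there exists s₀ ∈ ℝ such that for every real s > s₀ the function f_s is integrable on V_d(ℤ_p) and ∫_{V_d(ℤ_p)} f_s = (1/2)·(1+q⁻¹)⁻²·(1−q⁻¹)·(1−q⁻²)³·(1−q^{1−2s})⁻¹·(1−(q⁻¹λ²−1)·q^{1−2s}+(q⁻¹λ²−1)·q^{2−4s}−q^{3−6s})⁻¹·(1 + (1+q⁻¹+q^{−2s}+2q⁻¹λ)·q^{1−2s}). -/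

import Mathlib

open Matrix MeasureTheory

noncomputable instance (p : ℕ) [Fact p.Prime] : MeasurableSpace ℚ_[p] := borel _
instance (p : ℕ) [Fact p.Prime] : BorelSpace ℚ_[p] := ⟨rfl⟩
noncomputable instance (p : ℕ) [Fact p.Prime] :
    MeasurableSpace (Matrix (Fin 2) (Fin 2) ℚ_[p]) :=
  inferInstanceAs (MeasurableSpace (Fin 2 → Fin 2 → ℚ_[p]))

/-- `V = M₂(ℚ_p) × M₂(ℚ_p)`. -/
abbrev VV (p : ℕ) [Fact p.Prime] :=
  Matrix (Fin 2) (Fin 2) ℚ_[p] × Matrix (Fin 2) (Fin 2) ℚ_[p]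

/-- `P(x,y) = −det(x·y^ι − y·x^ι)`, where `m^ι` is the adjugate. -/
noncomputable def Pq {p : ℕ} [Fact p.Prime] (v : VV p) : ℚ_[p] :=
  - (v.1 * v.2.adjugate - v.2 * v.1.adjugate).det

/-- The equivariant map `F₁ : V → ℚ_p³`. -/
noncomputable def Fmap1 {p : ℕ} [Fact p.Prime] (v : VV p) : ℚ_[p] × ℚ_[p] × ℚ_[p] :=
  (v.1 0 0 * v.2 0 1 - v.1 0 1 * v.2 0 0,
   (v.1 0 0 * v.2 1 1 - v.1 0 1 * v.2 1 0) + (v.1 1 0 * v.2 0 1 - v.1 1 1 * v.2 0 0),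
   v.1 1 0 * v.2 1 1 - v.1 1 1 * v.2 1 0)

/-- The equivariant map `F₂ : V → ℚ_p³`. -/
noncomputable def Fmap2 {p : ℕ} [Fact p.Prime] (v : VV p) : ℚ_[p] × ℚ_[p] × ℚ_[p] :=
  (v.1 0 0 * v.2 1 0 - v.2 0 0 * v.1 1 0,
   (v.1 0 0 * v.2 1 1 - v.2 0 1 * v.1 1 0) + (v.1 0 1 * v.2 1 0 - v.2 0 0 * v.1 1 1),
   v.1 0 1 * v.2 1 1 - v.2 0 1 * v.1 1 1)

/-- The maximum of the `p`-adic absolute values of the three coordinates. -/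
noncomputable def mcoord {p : ℕ} [Fact p.Prime] (t : ℚ_[p] × ℚ_[p] × ℚ_[p]) : ℝ :=
  max (max ‖t.1‖ ‖t.2.1‖) ‖t.2.2‖

/-- `V_d(ℤ_p)`: integral pairs whose invariant `P` lies in `d·(ℚ_pˣ)²`. -/
def Vd (p : ℕ) [Fact p.Prime] (d : ℤ_[p]) : Set (VV p) :=
  {v | (∀ i j, ‖v.1 i j‖ ≤ 1) ∧ (∀ i j, ‖v.2 i j‖ ≤ 1) ∧
    ∃ c : ℚ_[p], c ≠ 0 ∧ Pq v = (d : ℚ_[p]) * c ^ 2}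

open Classical in
/-- The integrand `f_s`. -/
noncomputable def fs (p : ℕ) [Fact p.Prime] (d : ℤ_[p]) (β : ℕ → ℝ) (s : ℝ)
    (v : VV p) : ℝ :=
  if h : Pq v ≠ 0 ∧
      (∃ l : ℕ, ‖(d : ℚ_[p])‖ * mcoord (Fmap1 v) ^ 2 = ‖Pq v‖ * (p : ℝ) ^ (2 * l)) ∧
      (∃ l : ℕ, ‖(d : ℚ_[p])‖ * mcoord (Fmap2 v) ^ 2 = ‖Pq v‖ * (p : ℝ) ^ (2 * l)) then
    β h.2.1.choose * β h.2.2.choose * ‖Pq v‖ ^ (s - 2)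
  else 0


namespace ZInt

open Metric Set

section generic
variable {X Y : Type*} [AddCommGroup X] [TopologicalSpace X] [IsTopologicalAddGroup X]
  [MeasurableSpace X] [BorelSpace X]
  [AddCommGroup Y] [TopologicalSpace Y] [IsTopologicalAddGroup Y] [LocallyCompactSpace Y]
  [MeasurableSpace Y] [BorelSpace Y] [SecondCountableTopology Y]

/-- Haar measures correspond under isomorphisms up to a constant. -/
lemma exists_scale (μ : Measure X) [μ.IsAddHaarMeasure] (ν : Measure Y) [ν.IsAddHaarMeasure]
    (φ : X ≃ₜ+ Y) : ∃ c : ENNReal, ∀ S : Set Y, MeasurableSet S → μ (φ ⁻¹' S) = c * ν S := by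
  have h1 : (μ.map φ).IsAddHaarMeasure := φ.isAddHaarMeasure_map μ
  have h2 := Measure.isAddLeftInvariant_eq_smul (μ.map φ) ν
  refine ⟨(Measure.addHaarScalarFactor (μ.map φ) ν : ENNReal), fun S hS => ?_⟩
  have h3 : (μ.map φ) S = μ (φ ⁻¹' S) :=
    Measure.map_apply φ.continuous.measurable hS
  rw [← h3]
  conv_lhs => rw [h2]
  rfl

lemma haar_pres (μ : Measure X) [μ.IsAddHaarMeasure] (ν : Measure Y) [ν.IsAddHaarMeasure]
    (φ : X ≃ₜ+ Y) (L : Set Y) (hL : MeasurableSet L) (h : μ (φ ⁻¹' L) = 1) (h1 : ν L = 1)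
    (S : Set Y) (hS : MeasurableSet S) : μ (φ ⁻¹' S) = ν S := by
  obtain ⟨c, hc⟩ := exists_scale μ ν φ
  have := hc L hL
  rw [h, h1, mul_one] at this
  rw [hc S hS, ← this, one_mul]

end generic

lemma prod_const {X Y : Type*} [MeasurableSpace X] [MeasurableSpace Y] (μ : Measure X)
    (ν : Measure Y) [SFinite ν] (s : Set (X × Y)) (hs : MeasurableSet s) (B : Set X)
    (hB : MeasurableSet B) (c : ENNReal) (h1 : ∀ x ∈ B, ν (Prod.mk x ⁻¹' s) = c)
    (h0 : ∀ x, x ∉ B → Prod.mk x ⁻¹' s = ∅) : (μ.prod ν) s = μ B * c := by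
  rw [Measure.prod_apply hs]
  have : (fun x => ν (Prod.mk x ⁻¹' s)) = B.indicator (fun _ => c) := by
    funext x
    by_cases hx : x ∈ B
    · simp [hx, h1 x hx]
    · simp [hx, h0 x hx]
  rw [this, lintegral_indicator hB]
  simp [mul_comm]

section padic
variable {p : ℕ} [hpf : Fact p.Prime]

lemma p_pos : (0 : ℝ) < p := by exact_mod_cast hpf.out.pos
lemma p_gt : (1 : ℝ) < p := by exact_mod_cast hpf.out.one_lt
lemma p_ne : (p : ℝ) ≠ 0 := p_pos.ne'

lemma zle {a b : ℤ} : (p : ℝ) ^ (-a) ≤ (p : ℝ) ^ (-b) ↔ b ≤ a := by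
  rw [zpow_le_zpow_iff_right₀ p_gt]; omega
lemma zlt {a b : ℤ} : (p : ℝ) ^ (-a) < (p : ℝ) ^ (-b) ↔ b < a := by
  rw [zpow_lt_zpow_iff_right₀ p_gt]; omega
lemma zeq {a b : ℤ} : (p : ℝ) ^ (-a) = (p : ℝ) ^ (-b) ↔ a = b := by
  rw [zpow_right_inj₀ p_pos p_gt.ne']; omega

lemma zle1 {a : ℤ} : (p : ℝ) ^ (-a) ≤ 1 ↔ 0 ≤ a := by
  have := zle (p := p) (a := a) (b := 0); simpa using this

/-- the ball `p^k ℤ_p` -/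
def BB (p : ℕ) [Fact p.Prime] (k : ℤ) : Set ℚ_[p] := {x | ‖x‖ ≤ (p : ℝ) ^ (-k)}

lemma mem_BB {k : ℤ} {x : ℚ_[p]} : x ∈ BB p k ↔ ‖x‖ ≤ (p : ℝ) ^ (-k) := Iff.rfl

lemma BB_eq (k : ℤ) : BB p k = closedBall 0 ((p : ℝ) ^ (-k)) := by
  ext x; simp [BB]

lemma BB_meas (k : ℤ) : MeasurableSet (BB p k) := by
  rw [BB_eq]; exact isClosed_closedBall.measurableSet

/-- the normalized Haar measure on `ℚ_p` -/
noncomputable def nu (p : ℕ) [Fact p.Prime] : Measure ℚ_[p] :=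
  Measure.addHaarMeasure ⟨⟨closedBall 0 1, isCompact_closedBall _ _⟩,
    ⟨0, by
      rw [mem_interior]
      exact ⟨ball 0 1, ball_subset_closedBall, isOpen_ball, by simp⟩⟩⟩

instance : (nu p).IsAddHaarMeasure := by unfold nu; infer_instance

lemma nu_BB0 : nu p (BB p 0) = 1 := by
  rw [BB_eq]
  simp only [neg_zero, zpow_zero]
  exact Measure.addHaarMeasure_self

/-- multiplication by a nonzero scalar -/
noncomputable def mulE (a : ℚ_[p]) (ha : a ≠ 0) : ℚ_[p] ≃ₜ+ ℚ_[p] where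
  toFun x := a * x
  invFun x := a⁻¹ * x
  left_inv x := by field_simp
  right_inv x := by field_simp
  map_add' x y := by ring
  continuous_toFun := by fun_prop
  continuous_invFun := by fun_prop

lemma norm_exists {x : ℚ_[p]} (hx : x ≠ 0) : ∃ k : ℤ, ‖x‖ = (p : ℝ) ^ (-k) :=
  ⟨_, Padic.norm_eq_zpow_neg_valuation hx⟩

lemma norm_pp : ‖(p : ℚ_[p])‖ = (p : ℝ) ^ (-1 : ℤ) := by
  rw [Padic.norm_p, _root_.zpow_neg_one]

lemma lt_iff_le (x : ℚ_[p]) (k : ℤ) : ‖x‖ < (p : ℝ) ^ (-k) ↔ ‖x‖ ≤ (p : ℝ) ^ (-(k+1)) := by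
  rcases eq_or_ne x 0 with rfl | hx
  · have := zpow_pos (p_pos (p := p)) (-k)
    have := zpow_pos (p_pos (p := p)) (-(k+1))
    simp only [norm_zero]; constructor <;> intro <;> positivity
  · obtain ⟨m, hm⟩ := norm_exists hx
    rw [hm, zlt, zle]; omega

lemma lt_one_iff_le (x : ℚ_[p]) : ‖x‖ < 1 ↔ ‖x‖ ≤ (p : ℝ) ^ (-1 : ℤ) := by
  have := lt_iff_le x 0; simpa using this

lemma digit (x : ℚ_[p]) (hx : ‖x‖ ≤ 1) : ∃ n : ℕ, n < p ∧ ‖x - n‖ < 1 := by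
  obtain ⟨y, rfl⟩ : ∃ y : ℤ_[p], (y : ℚ_[p]) = x := ⟨⟨x, hx⟩, rfl⟩
  obtain ⟨n, hn, h⟩ := PadicInt.exists_mem_range y
  refine ⟨n, hn, ?_⟩
  rw [IsLocalRing.mem_maximalIdeal, PadicInt.mem_nonunits] at h
  rw [PadicInt.norm_def, PadicInt.coe_sub, PadicInt.coe_natCast] at h
  exact h

lemma nu_BB1 : (p : ENNReal) * nu p (BB p 1) = 1 := by
  have hU : BB p 0 = ⋃ i : Fin p, (fun x => (i : ℚ_[p]) * (-1) + x) ⁻¹' (BB p 1) := by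
    ext x
    simp only [mem_BB, mem_iUnion, mem_preimage, neg_zero, zpow_zero]
    constructor
    · intro h
      obtain ⟨n, hn, h2⟩ := digit x h
      refine ⟨⟨n, hn⟩, ?_⟩
      rw [lt_one_iff_le] at h2
      convert h2 using 2
      simp only; ring
    · rintro ⟨i, hi⟩
      rw [← lt_one_iff_le] at hi
      have h1 : ‖(i : ℚ_[p])‖ ≤ 1 := by
        simpa using Padic.norm_int_le_one (p := p) (i : ℤ)
      calc ‖x‖ = ‖((i : ℚ_[p]) * (-1) + x) + i‖ := by congr 1; ring
        _ ≤ max ‖((i : ℚ_[p]) * (-1) + x)‖ ‖(i : ℚ_[p])‖ := Padic.nonarchimedean _ _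
        _ ≤ 1 := max_le hi.le h1
  have h2 := nu_BB0 (p := p)
  rw [hU, measure_iUnion] at h2
  · simp only [measure_preimage_add] at h2
    simpa using h2
  · intro i j hij
    rw [Function.onFun, Set.disjoint_left]
    intro x h1 h2
    simp only [mem_preimage, mem_BB] at h1 h2
    rw [← lt_one_iff_le] at h1 h2
    have h3 : ‖((i : ℤ) - (j : ℤ) : ℤ)  * (1 : ℚ_[p])‖ < 1 := by
      calc ‖((i : ℤ) - (j : ℤ) : ℤ)  * (1 : ℚ_[p])‖
          = ‖((j : ℚ_[p]) * (-1) + x) + -((i : ℚ_[p]) * (-1) + x)‖ := by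
            congr 1; push_cast; ring
        _ ≤ max ‖((j : ℚ_[p]) * (-1) + x)‖ ‖-((i : ℚ_[p]) * (-1) + x)‖ := Padic.nonarchimedean _ _
        _ < 1 := by rw [norm_neg]; exact max_lt h2 h1
    rw [mul_one, Padic.norm_intCast_lt_one_iff] at h3
    have h4 : ((i : ℤ) - (j : ℤ)) = 0 := by
      apply Int.eq_zero_of_abs_lt_dvd h3
      rw [abs_lt]; have := i.2; have := j.2; omega
    exact hij (Fin.ext (by omega))
  · intro i
    exact (measurable_const_add _) (BB_meas 1)

lemma nu_BB_succ (k : ℤ) : nu p (BB p k) = (p : ENNReal) * nu p (BB p (k + 1)) := by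
  have hp0 : (p : ℚ_[p]) ≠ 0 := by exact_mod_cast hpf.out.ne_zero
  obtain ⟨c, hc⟩ := exists_scale (nu p) (nu p) (mulE (p : ℚ_[p]) hp0)
  have hpre : ∀ k : ℤ, (mulE (p : ℚ_[p]) hp0) ⁻¹' (BB p (k+1)) = BB p k := by
    intro k; ext x
    change ‖(p : ℚ_[p]) * x‖ ≤ _ ↔ ‖x‖ ≤ _
    rw [norm_mul, norm_pp, neg_add, add_comm, zpow_add₀ p_ne]
    exact mul_le_mul_iff_right₀ (zpow_pos p_pos _)
  have h0 := hc (BB p 1) (BB_meas 1)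
  have := hpre 0
  rw [zero_add] at this
  rw [this, nu_BB0, ← nu_BB1 (p := p)] at h0
  have hne : nu p (BB p 1) ≠ 0 := by
    intro h; have := nu_BB1 (p := p); rw [h] at this; simp at this
  have hnt : nu p (BB p 1) ≠ ⊤ := by
    intro h; have := nu_BB1 (p := p); rw [h] at this
    rw [ENNReal.mul_top] at this
    · simp at this
    · exact_mod_cast hpf.out.ne_zero
  have hcp : c = p := ((ENNReal.mul_left_inj hne hnt).1 h0).symm
  rw [← hpre k, hc _ (BB_meas _), hcp]

lemma nu_BB (k : ℤ) : nu p (BB p k) = ENNReal.ofReal ((p : ℝ) ^ (-k)) := by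
  have hp0 : (p : ENNReal) ≠ 0 := by exact_mod_cast hpf.out.ne_zero
  have key : ∀ k : ℤ, ENNReal.ofReal ((p : ℝ) ^ (-k))
      = (p : ENNReal) * ENNReal.ofReal ((p : ℝ) ^ (-(k+1))) := by
    intro k
    rw [← ENNReal.ofReal_natCast, ← ENNReal.ofReal_mul p_pos.le]
    congr 1
    rw [neg_add, zpow_add₀ p_ne]; have := p_ne (p := p); field_simp
  induction k using Int.induction_on with
  | zero => simp [nu_BB0]
  | succ k ih =>
    rw [nu_BB_succ, key] at ih
    exact (ENNReal.mul_right_inj hp0 (ENNReal.natCast_ne_top p)).1 ih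
  | pred k ih =>
    rw [nu_BB_succ, key]
    have e : (-(k:ℤ) - 1 + 1) = -k := by ring
    rw [e, ih]

lemma nu_scale (a : ℚ_[p]) (ha : a ≠ 0) (S : Set ℚ_[p]) (hS : MeasurableSet S) :
    nu p ((fun x => a * x) ⁻¹' S) = ENNReal.ofReal (‖a‖⁻¹) * nu p S := by
  obtain ⟨c, hc⟩ := exists_scale (nu p) (nu p) (mulE a ha)
  obtain ⟨k, hk⟩ := norm_exists ha
  have hpre : (mulE a ha) ⁻¹' (BB p 0) = BB p (-k) := by
    ext x
    change ‖a * x‖ ≤ _ ↔ ‖x‖ ≤ _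
    rw [norm_mul, hk]
    have h := zpow_pos (p_pos (p := p)) (-k)
    rw [neg_neg, neg_zero, zpow_zero, _root_.zpow_neg]
    rw [inv_mul_le_iff₀ (zpow_pos p_pos _), mul_one]
  have h0 := hc (BB p 0) (BB_meas 0)
  rw [hpre, nu_BB0, mul_one, nu_BB, neg_neg] at h0
  have := hc S hS
  rw [← h0] at this
  rw [hk, _root_.zpow_neg, inv_inv]
  exact this

/-- the sphere -/
def SS (p : ℕ) [Fact p.Prime] (k : ℤ) : Set ℚ_[p] := {x | ‖x‖ = (p : ℝ) ^ (-k)}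

lemma mem_SS {k : ℤ} {x : ℚ_[p]} : x ∈ SS p k ↔ ‖x‖ = (p : ℝ) ^ (-k) := Iff.rfl

lemma SS_eq (k : ℤ) : SS p k = BB p k \ BB p (k+1) := by
  ext x
  rw [mem_SS, mem_sdiff, mem_BB, mem_BB, ← lt_iff_le, not_lt]
  exact ⟨fun h => ⟨h.le, h.ge⟩, fun h => le_antisymm h.1 h.2⟩

lemma SS_meas (k : ℤ) : MeasurableSet (SS p k) := by
  rw [SS_eq]; exact (BB_meas _).diff (BB_meas _)

lemma nu_SS (k : ℤ) : nu p (SS p k) = ENNReal.ofReal ((p : ℝ) ^ (-k) * (1 - (p : ℝ)⁻¹)) := by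
  rw [SS_eq, measure_sdiff, nu_BB, nu_BB, ← ENNReal.ofReal_sub]
  · congr 1; rw [neg_add, zpow_add₀ p_ne, _root_.zpow_neg_one]; ring
  · exact (zpow_pos p_pos _).le
  · intro x hx; rw [mem_BB] at *; exact hx.trans (zle.2 (by omega))
  · exact (BB_meas _).nullMeasurableSet
  · rw [nu_BB]; exact ENNReal.ofReal_ne_top

end padic
end ZInt


namespace ZInt

open Metric Set

section arith
variable {p : ℕ} [hpf : Fact p.Prime]

lemma two_norm (hp : Odd p) : ‖(2 : ℚ_[p])‖ = 1 := by
  have h1 : ‖((2 : ℤ) : ℚ_[p])‖ ≤ 1 := Padic.norm_int_le_one 2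
  have h2 : ¬ ‖((2 : ℤ) : ℚ_[p])‖ < 1 := by
    rw [Padic.norm_intCast_lt_one_iff]
    intro h
    have h3 : p ∣ 2 := by exact_mod_cast h
    have h4 : p = 2 := (Nat.prime_dvd_prime_iff_eq hpf.out Nat.prime_two).1 h3
    rw [h4] at hp
    exact (by decide : ¬ Odd 2) hp
  push_cast at h1 h2
  exact le_antisymm h1 (not_lt.1 h2)

lemma four_norm (hp : Odd p) : ‖(4 : ℚ_[p])‖ = 1 := by
  have : (4 : ℚ_[p]) = 2 * 2 := by norm_num
  rw [this, norm_mul, two_norm hp, one_mul]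

lemma hensel_sq (hp : Odd p) (a u : ℤ_[p]) (ha : ‖a‖ = 1) (h : ‖a ^ 2 - u‖ < 1) :
    ∃ c : ℤ_[p], c ^ 2 = u := by
  let F : Polynomial ℤ_[p] := Polynomial.X ^ 2 - Polynomial.C u
  have e1 : F.aeval a = a ^ 2 - u := by simp [F]
  have e2 : F.derivative.aeval a = 2 * a := by
    simp only [F, Polynomial.derivative_sub, Polynomial.derivative_X_pow, Polynomial.derivative_C]
    simp
  have hn2 : ‖(2 : ℤ_[p])‖ = 1 := by
    rw [PadicInt.norm_def]; exact two_norm hp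
  obtain ⟨z, hz, -⟩ := hensels_lemma (F := F) (a := a) (by
    rw [e1, e2, norm_mul, hn2, ha]; simpa using h)
  refine ⟨z, ?_⟩
  have : z ^ 2 - u = 0 := by rw [← hz]; simp [F]
  exact sub_eq_zero.1 this

lemma norm_eq_one_of_sq {a : ℚ_[p]} (h : ‖a ^ 2‖ = 1) : ‖a‖ = 1 := by
  rw [norm_pow] at h
  exact (pow_eq_one_iff_of_nonneg (norm_nonneg a) (by norm_num)).1 h

lemma sq_of_residue (hp : Odd p) (u : ℤ_[p]) (hu : ‖u‖ = 1)
    (h : IsSquare (PadicInt.toZMod u)) : ∃ c : ℤ_[p], c ^ 2 = u := by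
  obtain ⟨r, hr⟩ := h
  obtain ⟨a, ha⟩ := ZMod.ringHom_surjective (PadicInt.toZMod (p := p)) r
  have hlt : ‖a ^ 2 - u‖ < 1 := by
    have : a ^ 2 - u ∈ RingHom.ker (PadicInt.toZMod (p := p)) := by
      rw [RingHom.mem_ker, map_sub, map_pow, ha, hr]; ring
    rw [PadicInt.ker_toZMod, IsLocalRing.mem_maximalIdeal, PadicInt.mem_nonunits] at this
    exact this
  refine hensel_sq hp a u ?_ hlt
  by_contra hne
  have ha1 : ‖a‖ < 1 := lt_of_le_of_ne (PadicInt.norm_le_one a) hne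
  have : ‖u‖ < 1 := by
    calc ‖u‖ = ‖a ^ 2 + -(a ^ 2 - u)‖ := by congr 1; ring
      _ ≤ max ‖a ^ 2‖ ‖-(a ^ 2 - u)‖ := PadicInt.nonarchimedean _ _
      _ < 1 := by
        rw [norm_neg]
        refine max_lt ?_ hlt
        rw [norm_pow]; exact pow_lt_one₀ (norm_nonneg _) ha1 (by norm_num)
  linarith

/-- units: squares and `D` times squares -/
lemma dichotomy (hp : Odd p) (D u : ℚ_[p]) (hD : ‖D‖ = 1) (hDs : ¬ ∃ c, D = c ^ 2)
    (hu : ‖u‖ = 1) : (∃ c, ‖c‖ = 1 ∧ u = c ^ 2) ∨ (∃ c, ‖c‖ = 1 ∧ u = D * c ^ 2) := by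
  obtain ⟨D', rfl⟩ : ∃ y : ℤ_[p], (y : ℚ_[p]) = D := ⟨⟨D, hD.le⟩, rfl⟩
  obtain ⟨u', rfl⟩ : ∃ y : ℤ_[p], (y : ℚ_[p]) = u := ⟨⟨u, hu.le⟩, rfl⟩
  have hD' : ‖D'‖ = 1 := hD
  have hu' : ‖u'‖ = 1 := hu
  have nz : ∀ w : ℤ_[p], ‖w‖ = 1 → PadicInt.toZMod w ≠ 0 := by
    intro w hw h0
    have : w ∈ RingHom.ker (PadicInt.toZMod (p := p)) := h0
    rw [PadicInt.ker_toZMod, IsLocalRing.mem_maximalIdeal, PadicInt.mem_nonunits] at this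
    linarith
  have hDn : ¬ IsSquare (PadicInt.toZMod D') := by
    intro h
    obtain ⟨c, hc⟩ := sq_of_residue hp D' hD' h
    exact hDs ⟨c, by rw [← hc]; push_cast; rfl⟩
  have fromsq : ∀ w : ℤ_[p], ‖w‖ = 1 → (∃ c : ℤ_[p], c ^ 2 = w) →
      ∃ c : ℚ_[p], ‖c‖ = 1 ∧ (w : ℚ_[p]) = c ^ 2 := by
    rintro w hw ⟨c, rfl⟩
    refine ⟨c, ?_, by push_cast; rfl⟩
    apply norm_eq_one_of_sq
    have := hw
    rw [PadicInt.norm_def, PadicInt.coe_pow] at this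
    exact this
  by_cases hs : IsSquare (PadicInt.toZMod u')
  · left
    exact fromsq u' hu' (sq_of_residue hp u' hu' hs)
  · right
    have hp2 : ringChar (ZMod p) ≠ 2 := by
      rw [ZMod.ringChar_zmod_n]; rintro rfl; exact (by decide : ¬ Odd 2) hp
    have hprod : IsSquare (PadicInt.toZMod (u' * D')) := by
      rw [← quadraticChar_one_iff_isSquare (nz _ (by rw [norm_mul, hu', hD', one_mul])),
        map_mul, map_mul, quadraticChar_neg_one_iff_not_isSquare.2 hs,
        quadraticChar_neg_one_iff_not_isSquare.2 hDn]
      norm_num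
    have hn : ‖u' * D'‖ = 1 := by rw [norm_mul, hu', hD', one_mul]
    obtain ⟨c, hc1, hc⟩ := fromsq _ hn (sq_of_residue hp _ hn hprod)
    have hD0 : (D' : ℚ_[p]) ≠ 0 := by intro h; rw [h] at hD; simp at hD
    refine ⟨c / D', by rw [norm_div, hc1, hD, div_one], ?_⟩
    rw [div_pow, ← hc]; push_cast; field_simp

lemma aniso (hp : Odd p) (D z c : ℚ_[p]) (hD : ‖D‖ = 1) (hDs : ¬ ∃ c, D = c ^ 2) :
    ‖z ^ 2 - D * c ^ 2‖ = (max ‖z‖ ‖c‖) ^ 2 := by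
  rcases eq_or_ne ‖z‖ ‖c‖ with h | h
  · rw [h, max_self]
    rcases eq_or_ne c 0 with rfl | hc
    · have hz : z = 0 := by simpa using h
      simp [hz]
    have hcn : ‖c‖ ≠ 0 := by simpa using hc
    have ha : ‖z / c‖ = 1 := by rw [norm_div, h, div_self hcn]
    have key : ‖(z / c) ^ 2 - D‖ = 1 := by
      apply le_antisymm
      · rw [sub_eq_add_neg]
        refine (Padic.nonarchimedean _ _).trans (max_le ?_ ?_)
        · rw [norm_pow, ha, one_pow]
        · rw [norm_neg, hD]
      · by_contra hlt
        rw [not_le] at hlt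
        obtain ⟨c', hc'⟩ := hensel_sq hp (⟨z / c, ha.le⟩ : ℤ_[p]) (⟨D, hD.le⟩ : ℤ_[p]) ha hlt
        exact hDs ⟨c', by
          have := congrArg (fun t : ℤ_[p] => (t : ℚ_[p])) hc'
          simp only [PadicInt.coe_pow] at this
          exact this.symm⟩
    have e : z ^ 2 - D * c ^ 2 = ((z / c) ^ 2 - D) * c ^ 2 := by field_simp
    rw [e, norm_mul, key, one_mul, norm_pow]
  · have h1 : ‖z ^ 2‖ ≠ ‖-(D * c ^ 2)‖ := by
      rw [norm_neg, norm_mul, hD, one_mul, norm_pow, norm_pow]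
      intro h2
      exact h ((pow_left_inj₀ (norm_nonneg _) (norm_nonneg _) (by norm_num)).1 h2)
    rw [sub_eq_add_neg, Padic.add_eq_max_of_ne h1, norm_neg, norm_mul, hD, one_mul, norm_pow,
      norm_pow]
    rcases le_total ‖z‖ ‖c‖ with h3 | h3
    · rw [max_eq_right h3, max_eq_right (pow_le_pow_left₀ (norm_nonneg _) h3 2)]
    · rw [max_eq_left h3, max_eq_left (pow_le_pow_left₀ (norm_nonneg _) h3 2)]

/-- values of discriminant type `D` and valuation twice n -/
def DD (D : ℚ_[p]) (n : ℤ) : Set ℚ_[p] := {P | ∃ c, ‖c‖ = (p : ℝ) ^ (-n) ∧ P = D * c ^ 2}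

lemma DD_meas (D : ℚ_[p]) (n : ℤ) : MeasurableSet (DD D n) := by
  have : DD D n = (fun c => D * c ^ 2) '' (sphere 0 ((p : ℝ) ^ (-n))) := by
    ext P; simp [DD, eq_comm]
  rw [this]
  exact ((isCompact_sphere _ _).image (by fun_prop)).isClosed.measurableSet

lemma nu_DD0 (hp : Odd p) (D : ℚ_[p]) (hD : ‖D‖ = 1) (hDs : ¬ ∃ c, D = c ^ 2) :
    nu p (DD D 0) = ENNReal.ofReal ((1 - (p : ℝ)⁻¹) / 2) := by
  have hD0 : D ≠ 0 := by intro h; rw [h] at hD; simp at hD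
  have hU : SS p 0 = DD (1 : ℚ_[p]) 0 ∪ DD D 0 := by
    ext u
    simp only [mem_SS, DD, mem_union, mem_ofPred_eq, neg_zero, zpow_zero, one_mul]
    constructor
    · exact dichotomy hp D u hD hDs
    · rintro (⟨c, hc, rfl⟩ | ⟨c, hc, rfl⟩)
      · simp [hc]
      · simp [hc, hD]
  have hdisj : Disjoint (DD (1 : ℚ_[p]) 0) (DD D 0) := by
    rw [Set.disjoint_left]
    rintro u ⟨c, hc, h1⟩ ⟨c', hc', h2⟩
    have hc0 : c' ≠ 0 := by rintro rfl; simp at hc'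
    apply hDs
    refine ⟨c / c', ?_⟩
    rw [div_pow, eq_div_iff (pow_ne_zero 2 hc0), ← h2, h1, one_mul]
  have heq : nu p (DD D 0) = nu p (DD (1 : ℚ_[p]) 0) := by
    have h := nu_scale D hD0 (DD D 0) (DD_meas D 0)
    rw [hD, inv_one, ENNReal.ofReal_one, one_mul] at h
    rw [← h]
    congr 1
    ext x
    simp only [DD, mem_preimage, mem_ofPred_eq, one_mul]
    constructor
    · rintro ⟨c, hc, h⟩; exact ⟨c, hc, mul_left_cancel₀ hD0 h⟩
    · rintro ⟨c, hc, h⟩; exact ⟨c, hc, by rw [h]⟩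
  have h := nu_SS (p := p) 0
  rw [hU, measure_union hdisj (DD_meas _ _), ← heq, neg_zero, zpow_zero, one_mul, ← two_mul] at h
  have hp1 : (p : ℝ)⁻¹ < 1 := inv_lt_one_of_one_lt₀ p_gt
  rw [ENNReal.ofReal_div_of_pos (by norm_num), ← h]
  rw [ENNReal.ofReal_ofNat, mul_comm, ENNReal.mul_div_cancel_right (by norm_num) (by norm_num)]

/-- volume of `DD` -/
noncomputable def kap (p : ℕ) (n : ℤ) : ℝ := (p : ℝ) ^ (-(2 * n)) * ((1 - (p : ℝ)⁻¹) / 2)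

lemma nu_DD (hp : Odd p) (D : ℚ_[p]) (hD : ‖D‖ = 1) (hDs : ¬ ∃ c, D = c ^ 2) (n : ℤ) :
    nu p (DD D n) = ENNReal.ofReal (kap p n) := by
  have hp0 : (p : ℚ_[p]) ≠ 0 := by exact_mod_cast hpf.out.ne_zero
  have ha : ((p : ℚ_[p]) ^ (2 * n)) ≠ 0 := zpow_ne_zero _ hp0
  have hnz : ∀ m : ℤ, ‖(p : ℚ_[p]) ^ m‖ = (p : ℝ) ^ (-m) := by
    intro m; rw [norm_zpow, Padic.norm_p, _root_.inv_zpow, _root_.zpow_neg]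
  have h := nu_scale ((p : ℚ_[p]) ^ (2 * n)) ha (DD D n) (DD_meas D n)
  have hpre : (fun x => (p : ℚ_[p]) ^ (2 * n) * x) ⁻¹' (DD D n) = DD D 0 := by
    ext x
    simp only [DD, mem_preimage, mem_ofPred_eq, neg_zero, zpow_zero]
    have e2 : (p : ℚ_[p]) ^ (2 * n) = ((p : ℚ_[p]) ^ n) ^ 2 := by
      rw [← zpow_natCast, ← _root_.zpow_mul, mul_comm]; rfl
    have hn0 : ((p : ℚ_[p]) ^ n) ≠ 0 := zpow_ne_zero _ hp0
    constructor
    · rintro ⟨c, hc, h⟩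
      refine ⟨c / (p : ℚ_[p]) ^ n, ?_, ?_⟩
      · rw [norm_div, hc, hnz, div_self (zpow_ne_zero _ p_ne)]
      · rw [e2] at h
        rw [div_pow, mul_div_assoc', eq_div_iff (pow_ne_zero 2 hn0), ← h]; ring
    · rintro ⟨c, hc, h⟩
      refine ⟨c * (p : ℚ_[p]) ^ n, ?_, ?_⟩
      · rw [norm_mul, hc, hnz, one_mul]
      · rw [h, e2]; ring
  rw [hpre, nu_DD0 hp D hD hDs, hnz, ← _root_.zpow_neg, neg_neg] at h
  have h2 : ENNReal.ofReal (kap p n) = ENNReal.ofReal ((p:ℝ) ^ (-(2 * n))) *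
      (ENNReal.ofReal ((p:ℝ) ^ (2 * n)) * nu p (DD D n)) := by
    rw [← h, kap, ENNReal.ofReal_mul (zpow_pos p_pos _).le]
  rw [h2, ← mul_assoc, ← ENNReal.ofReal_mul (zpow_pos p_pos _).le, ← zpow_add₀ p_ne]
  simp

end arith
end ZInt


namespace ZInt

open Metric Set

section four
variable {p : ℕ} [hpf : Fact p.Prime]

/-- four-dimensional space -/
abbrev K4 (p : ℕ) [Fact p.Prime] := ℚ_[p] × ℚ_[p] × ℚ_[p] × ℚ_[p]

/-- normalized Haar measure on `K4` -/
noncomputable def nu4 (p : ℕ) [Fact p.Prime] : Measure (K4 p) :=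
  (nu p).prod ((nu p).prod ((nu p).prod (nu p)))

instance nuHaar2 : ((nu p).prod (nu p)).IsAddHaarMeasure :=
  Measure.prod.instIsAddHaarMeasure _ _
instance nuHaar3 : ((nu p).prod ((nu p).prod (nu p))).IsAddHaarMeasure :=
  Measure.prod.instIsAddHaarMeasure _ _
instance nu4Haar : (nu4 p).IsAddHaarMeasure :=
  Measure.prod.instIsAddHaarMeasure (nu p) ((nu p).prod ((nu p).prod (nu p)))
instance : SFinite (nu4 p) := by unfold nu4; infer_instance

lemma nu4_box (a b c d : Set ℚ_[p]) :
    nu4 p (a ×ˢ b ×ˢ c ×ˢ d) = nu p a * (nu p b * (nu p c * nu p d)) := by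
  simp only [nu4, Measure.prod_prod]

/-- standard lattice -/
def L4 (p : ℕ) [Fact p.Prime] : Set (K4 p) := BB p 0 ×ˢ BB p 0 ×ˢ BB p 0 ×ˢ BB p 0

lemma L4_meas : MeasurableSet (L4 p) :=
  (BB_meas 0).prod ((BB_meas 0).prod ((BB_meas 0).prod (BB_meas 0)))

lemma nu4_L4 : nu4 p (L4 p) = 1 := by
  rw [L4, nu4_box, nu_BB0]; simp

lemma nu4_pres (φ : K4 p ≃ₜ+ K4 p) (h : φ ⁻¹' (L4 p) = L4 p) (S : Set (K4 p))
    (hS : MeasurableSet S) : nu4 p (φ ⁻¹' S) = nu4 p S :=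
  haar_pres (nu4 p) (nu4 p) φ (L4 p) L4_meas (by rw [h, nu4_L4]) nu4_L4 S hS

/-- solution set -/
def Sol (D : ℚ_[p]) (n a b M : ℤ) : Set (K4 p) :=
  {v | ‖v.1‖ = (p : ℝ) ^ (-a) ∧ ‖v.2.1‖ = (p : ℝ) ^ (-b) ∧ ‖v.2.2.1‖ ≤ (p : ℝ) ^ (-M) ∧
    v.2.2.1 ^ 2 + 4 * v.1 * v.2.1 * v.2.2.2 ∈ DD D n}

lemma Sol_meas (D : ℚ_[p]) (n a b M : ℤ) : MeasurableSet (Sol D n a b M) := by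
  refine MeasurableSet.inter ?_ (MeasurableSet.inter ?_ (MeasurableSet.inter ?_ ?_))
  · exact (by fun_prop : Measurable (fun v : K4 p => v.1)) (SS_meas a)
  · exact (by fun_prop : Measurable (fun v : K4 p => v.2.1)) (SS_meas b)
  · exact (by fun_prop : Measurable (fun v : K4 p => v.2.2.1)) (BB_meas M)
  · exact (by fun_prop : Measurable (fun v : K4 p =>
      v.2.2.1 ^ 2 + 4 * v.1 * v.2.1 * v.2.2.2)) (DD_meas D n)

/-- constant -/
noncomputable def uu (p : ℕ) (n : ℤ) : ℝ := (1 - (p : ℝ)⁻¹) ^ 2 * kap p n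

lemma one_sub_pos : 0 < 1 - (p : ℝ)⁻¹ := by
  have : (p : ℝ)⁻¹ < 1 := inv_lt_one_of_one_lt₀ p_gt
  linarith

lemma kap_pos (n : ℤ) : 0 < kap p n := by
  have h := one_sub_pos (p := p)
  have := zpow_pos (p_pos (p := p)) (-(2 * n))
  unfold kap; positivity

lemma uu_pos (n : ℤ) : 0 < uu p n := by
  have h := one_sub_pos (p := p)
  have := kap_pos (p := p) n
  unfold uu; positivity

lemma nu_affine (hp : Odd p) (D : ℚ_[p]) (hD : ‖D‖ = 1) (hDs : ¬ ∃ c, D = c ^ 2) (n a b : ℤ)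
    (r s z : ℚ_[p]) (hr : ‖r‖ = (p : ℝ) ^ (-a)) (hs : ‖s‖ = (p : ℝ) ^ (-b)) :
    nu p {w | z ^ 2 + 4 * r * s * w ∈ DD D n} = ENNReal.ofReal ((p : ℝ) ^ (a + b) * kap p n) := by
  have hk : 4 * r * s ≠ 0 := by
    rw [← norm_ne_zero_iff, norm_mul, norm_mul, four_norm hp, hr, hs, one_mul]
    exact mul_ne_zero (zpow_ne_zero _ p_ne) (zpow_ne_zero _ p_ne)
  have e : {w | z ^ 2 + 4 * r * s * w ∈ DD D n} =
      (fun w => (4 * r * s) * w) ⁻¹' ((fun t => z ^ 2 + t) ⁻¹' DD D n) := rfl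
  rw [e, nu_scale _ hk _ ((measurable_const_add _) (DD_meas D n)), measure_preimage_add,
    nu_DD hp D hD hDs, ← ENNReal.ofReal_mul (by positivity)]
  congr 2
  rw [norm_mul, norm_mul, four_norm hp, hr, hs, one_mul, ← zpow_add₀ p_ne, ← _root_.zpow_neg]
  congr 1; ring

lemma nu4_Sol (hp : Odd p) (D : ℚ_[p]) (hD : ‖D‖ = 1) (hDs : ¬ ∃ c, D = c ^ 2) (n a b M : ℤ) :
    nu4 p (Sol D n a b M) = ENNReal.ofReal (uu p n * (p : ℝ) ^ (-M)) := by
  have hq := one_sub_pos (p := p)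
  have hkp := kap_pos (p := p) n
  have zp : ∀ m : ℤ, 0 < (p : ℝ) ^ m := fun m => zpow_pos p_pos m
  have m1 := Sol_meas D n a b M
  unfold nu4
  rw [prod_const _ _ _ m1 (SS p a) (SS_meas a) (ENNReal.ofReal ((p : ℝ) ^ (-b) *
    (1 - (p : ℝ)⁻¹)) * (ENNReal.ofReal ((p : ℝ) ^ (-M)) *
      ENNReal.ofReal ((p : ℝ) ^ (a + b) * kap p n)))]
  · rw [nu_SS, ← ENNReal.ofReal_mul (zp _).le, ← ENNReal.ofReal_mul (by have := zp (-b); positivity),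
      ← ENNReal.ofReal_mul (by have := zp (-a); positivity)]
    congr 1
    rw [zpow_add₀ p_ne, _root_.zpow_neg, _root_.zpow_neg, _root_.zpow_neg, uu]
    have := zp a; have := zp b; have := zp M
    field_simp
  · intro r hr
    have m2 := measurable_prodMk_left (x := r) m1
    rw [prod_const _ _ _ m2 (SS p b) (SS_meas b) (ENNReal.ofReal ((p : ℝ) ^ (-M)) *
      ENNReal.ofReal ((p : ℝ) ^ (a + b) * kap p n)), nu_SS]
    · intro s hs
      have m3 := measurable_prodMk_left (x := s) m2
      rw [prod_const _ _ _ m3 (BB p M) (BB_meas M)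
        (ENNReal.ofReal ((p : ℝ) ^ (a + b) * kap p n)), nu_BB]
      · intro z hz
        rw [← nu_affine hp D hD hDs n a b r s z hr hs]
        congr 1
        ext w
        exact ⟨fun h => h.2.2.2, fun h => ⟨hr, hs, hz, h⟩⟩
      · intro z hz
        ext w
        exact ⟨fun h => hz h.2.2.1, fun h => h.elim⟩
    · intro s hs
      ext w
      exact ⟨fun h => hs h.2.1, fun h => h.elim⟩
  · intro r hr
    ext w
    exact ⟨fun h => hr h.1, fun h => h.elim⟩

/-- permutation -/
def permA : K4 p ≃ₜ+ K4 p where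
  toFun v := (v.1, v.2.2.1, v.2.2.2, v.2.1)
  invFun v := (v.1, v.2.2.2, v.2.1, v.2.2.1)
  left_inv v := rfl
  right_inv v := rfl
  map_add' v w := rfl
  continuous_toFun := by fun_prop
  continuous_invFun := by fun_prop

/-- permutation -/
def permB : K4 p ≃ₜ+ K4 p where
  toFun v := (v.2.1, v.2.2.1, v.2.2.2, v.1)
  invFun v := (v.2.2.2, v.1, v.2.1, v.2.2.1)
  left_inv v := rfl
  right_inv v := rfl
  map_add' v w := rfl
  continuous_toFun := by fun_prop
  continuous_invFun := by fun_prop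

/-- permutation -/
def permC : K4 p ≃ₜ+ K4 p where
  toFun v := (v.1, v.2.1, v.2.2.2, v.2.2.1)
  invFun v := (v.1, v.2.1, v.2.2.2, v.2.2.1)
  left_inv v := rfl
  right_inv v := rfl
  map_add' v w := rfl
  continuous_toFun := by fun_prop
  continuous_invFun := by fun_prop

/-- reduced discriminant, coordinates `(δ, x, y, z)` -/
noncomputable def Pr (v : K4 p) : ℚ_[p] := v.2.2.2 ^ 2 + 4 * v.1 * v.2.1 * v.2.2.1

lemma Pr_cont : Continuous (Pr (p := p)) := by unfold Pr; fun_prop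

def FamA (D : ℚ_[p]) (n a b M : ℤ) : Set (K4 p) :=
  {v | ‖v.1‖ = (p : ℝ) ^ (-a) ∧ ‖v.2.2.1‖ = (p : ℝ) ^ (-b) ∧ ‖v.2.2.2‖ ≤ (p : ℝ) ^ (-M) ∧
    Pr v ∈ DD D n}
def FamB (D : ℚ_[p]) (n a b M : ℤ) : Set (K4 p) :=
  {v | ‖v.2.1‖ = (p : ℝ) ^ (-a) ∧ ‖v.2.2.1‖ = (p : ℝ) ^ (-b) ∧ ‖v.2.2.2‖ ≤ (p : ℝ) ^ (-M) ∧
    Pr v ∈ DD D n}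
def FamC (D : ℚ_[p]) (n a b M : ℤ) : Set (K4 p) :=
  {v | ‖v.1‖ = (p : ℝ) ^ (-a) ∧ ‖v.2.1‖ = (p : ℝ) ^ (-b) ∧ ‖v.2.2.2‖ ≤ (p : ℝ) ^ (-M) ∧
    Pr v ∈ DD D n}

lemma FamA_eq (D : ℚ_[p]) (n a b M : ℤ) : FamA D n a b M = permA ⁻¹' (Sol D n a b M) := by
  ext ⟨d, x, y, z⟩
  have : Pr (d, x, y, z) = z ^ 2 + 4 * d * y * x := by unfold Pr; ring
  unfold FamA
  simp only [mem_ofPred_eq, this]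
  exact Iff.rfl

lemma FamB_eq (D : ℚ_[p]) (n a b M : ℤ) : FamB D n a b M = permB ⁻¹' (Sol D n a b M) := by
  ext ⟨d, x, y, z⟩
  have : Pr (d, x, y, z) = z ^ 2 + 4 * x * y * d := by unfold Pr; ring
  unfold FamB
  simp only [mem_ofPred_eq, this]
  exact Iff.rfl

lemma FamC_eq (D : ℚ_[p]) (n a b M : ℤ) : FamC D n a b M = permC ⁻¹' (Sol D n a b M) := by
  ext ⟨d, x, y, z⟩
  have : Pr (d, x, y, z) = z ^ 2 + 4 * d * x * y := by unfold Pr; ring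
  unfold FamC
  simp only [mem_ofPred_eq, this]
  exact Iff.rfl

lemma FamA_meas (D : ℚ_[p]) (n a b M : ℤ) : MeasurableSet (FamA D n a b M) := by
  rw [FamA_eq]; exact permA.continuous.measurable (Sol_meas ..)
lemma FamB_meas (D : ℚ_[p]) (n a b M : ℤ) : MeasurableSet (FamB D n a b M) := by
  rw [FamB_eq]; exact permB.continuous.measurable (Sol_meas ..)
lemma FamC_meas (D : ℚ_[p]) (n a b M : ℤ) : MeasurableSet (FamC D n a b M) := by
  rw [FamC_eq]; exact permC.continuous.measurable (Sol_meas ..)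

lemma nu4_FamA (hp : Odd p) (D : ℚ_[p]) (hD : ‖D‖ = 1) (hDs : ¬ ∃ c, D = c ^ 2) (n a b M : ℤ) :
    nu4 p (FamA D n a b M) = ENNReal.ofReal (uu p n * (p : ℝ) ^ (-M)) := by
  rw [FamA_eq, nu4_pres _ _ _ (Sol_meas ..), nu4_Sol hp D hD hDs]
  ext v; simp [permA, L4]; tauto
lemma nu4_FamB (hp : Odd p) (D : ℚ_[p]) (hD : ‖D‖ = 1) (hDs : ¬ ∃ c, D = c ^ 2) (n a b M : ℤ) :
    nu4 p (FamB D n a b M) = ENNReal.ofReal (uu p n * (p : ℝ) ^ (-M)) := by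
  rw [FamB_eq, nu4_pres _ _ _ (Sol_meas ..), nu4_Sol hp D hD hDs]
  ext v; simp [permB, L4]; tauto
lemma nu4_FamC (hp : Odd p) (D : ℚ_[p]) (hD : ‖D‖ = 1) (hDs : ¬ ∃ c, D = c ^ 2) (n a b M : ℤ) :
    nu4 p (FamC D n a b M) = ENNReal.ofReal (uu p n * (p : ℝ) ^ (-M)) := by
  rw [FamC_eq, nu4_pres _ _ _ (Sol_meas ..), nu4_Sol hp D hD hDs]
  ext v; simp [permC, L4]; tauto

/-- valuations attached to a reduced cube -/
lemma vals (hp : Odd p) (D : ℚ_[p]) (hD : ‖D‖ = 1) (hDs : ¬ ∃ c, D = c ^ 2) (n : ℤ) (v : K4 p)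
    (h : Pr v ∈ DD D n) : ∃ b j i m : ℤ, ‖v.1‖ = (p : ℝ) ^ (-b) ∧ ‖v.2.1‖ = (p : ℝ) ^ (-j) ∧
      ‖v.2.2.1‖ = (p : ℝ) ^ (-i) ∧ b + j + i = 2 * m ∧ m ≤ n ∧
      ∀ k ≤ n, (‖v.2.2.2‖ ≤ (p : ℝ) ^ (-k) ↔ k ≤ m) := by
  obtain ⟨d, x, y, z⟩ := v
  obtain ⟨c, hc, h⟩ := h
  simp only [Pr] at h ⊢
  have hzz : (0 : ℝ) < (p : ℝ) ^ (-n) := zpow_pos p_pos _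
  have h1 := aniso hp D z c hD hDs
  have e : z ^ 2 - D * c ^ 2 = -(4 * d * x * y) := by rw [← h]; ring
  rw [e, norm_neg, norm_mul, norm_mul, norm_mul, four_norm hp, one_mul, hc] at h1
  have hpos : 0 < max ‖z‖ ((p : ℝ) ^ (-n)) := lt_max_of_lt_right hzz
  have hne : ‖d‖ * ‖x‖ * ‖y‖ ≠ 0 := by rw [h1]; positivity
  have hd : d ≠ 0 := by rintro rfl; simp at hne
  have hx : x ≠ 0 := by rintro rfl; simp at hne
  have hy : y ≠ 0 := by rintro rfl; simp at hne
  obtain ⟨b, hb⟩ := norm_exists hd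
  obtain ⟨j, hj⟩ := norm_exists hx
  obtain ⟨i, hi⟩ := norm_exists hy
  obtain ⟨m, hm, hmn⟩ : ∃ m : ℤ, max ‖z‖ ((p : ℝ) ^ (-n)) = (p : ℝ) ^ (-m) ∧ m ≤ n := by
    rcases le_total ‖z‖ ((p : ℝ) ^ (-n)) with h2 | h2
    · exact ⟨n, max_eq_right h2, le_rfl⟩
    · have hz : z ≠ 0 := by rintro rfl; rw [norm_zero] at h2; linarith
      obtain ⟨k, hk⟩ := norm_exists hz
      refine ⟨k, by rw [max_eq_left h2, hk], ?_⟩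
      rw [hk, zle] at h2; exact h2
  refine ⟨b, j, i, m, hb, hj, hi, ?_, hmn, ?_⟩
  · rw [hm, hb, hj, hi, ← zpow_add₀ p_ne, ← zpow_add₀ p_ne, ← zpow_natCast, ← _root_.zpow_mul] at h1
    have := zpow_right_injective₀ (p_pos (p := p)) p_gt.ne' h1
    push_cast at this; linarith
  · intro k hk
    constructor
    · intro h2
      have : (p : ℝ) ^ (-m) ≤ (p : ℝ) ^ (-k) := by rw [← hm]; exact max_le h2 (zle.2 hk)
      exact zle.1 this
    · intro h2
      calc ‖z‖ ≤ (p : ℝ) ^ (-m) := by rw [← hm]; exact le_max_left _ _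
        _ ≤ _ := zle.2 h2

/-- the reduced level set -/
def LL (D : ℚ_[p]) (n α β er et : ℤ) : Set (K4 p) :=
  {v | (‖v.1‖ ≤ (p : ℝ) ^ (-er) ∧ ‖v.2.1‖ ≤ (p : ℝ) ^ (-et) ∧ ‖v.2.2.1‖ ≤ (p : ℝ) ^ (-et) ∧
    ‖v.2.2.2‖ ≤ (p : ℝ) ^ (-et)) ∧ Pr v ∈ DD D n ∧
    max (max ‖v.1‖ ‖v.2.2.2‖) ‖v.2.1 * v.2.2.1‖ = (p : ℝ) ^ (-α) ∧
    max (max ‖v.2.2.1‖ ‖v.2.2.2‖) ‖v.1 * v.2.1‖ = (p : ℝ) ^ (-β)}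

lemma zmax (a b : ℤ) : max ((p : ℝ) ^ (-a)) ((p : ℝ) ^ (-b)) = (p : ℝ) ^ (-(min a b)) := by
  rcases le_total a b with h | h
  · rw [min_eq_left h, max_eq_left (zle.2 h)]
  · rw [min_eq_right h, max_eq_right (zle.2 h)]

lemma zmax3 (a b : ℤ) (t : ℝ) (ht : t ≤ (p : ℝ) ^ (-(min a b))) :
    max (max ((p : ℝ) ^ (-a)) t) ((p : ℝ) ^ (-b)) = (p : ℝ) ^ (-(min a b)) := by
  rw [max_right_comm, zmax, max_eq_left ht]

lemma mem_LL (D : ℚ_[p]) (n α β er et b j i m : ℤ) (v : K4 p) (her : 0 ≤ er) (het : 0 ≤ et)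
    (hP : Pr v ∈ DD D n) (hb : ‖v.1‖ = (p : ℝ) ^ (-b)) (hj : ‖v.2.1‖ = (p : ℝ) ^ (-j))
    (hi : ‖v.2.2.1‖ = (p : ℝ) ^ (-i)) (hm : b + j + i = 2 * m) (hmn : m ≤ n)
    (hz : ∀ k ≤ n, (‖v.2.2.2‖ ≤ (p : ℝ) ^ (-k) ↔ k ≤ m)) :
    v ∈ LL D n α β er et ↔ er ≤ b ∧ et ≤ j ∧ et ≤ i ∧ min b (j + i) = α ∧ min i (b + j) = β := by
  have hzm : ‖v.2.2.2‖ ≤ (p : ℝ) ^ (-m) := (hz m hmn).2 le_rfl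
  have c1 : max (max ‖v.1‖ ‖v.2.2.2‖) ‖v.2.1 * v.2.2.1‖ = (p : ℝ) ^ (-(min b (j + i))) := by
    rw [norm_mul, hb, hj, hi, ← zpow_add₀ p_ne, ← neg_add]
    exact zmax3 _ _ _ (hzm.trans (zle.2 (by omega)))
  have c2 : max (max ‖v.2.2.1‖ ‖v.2.2.2‖) ‖v.1 * v.2.1‖ = (p : ℝ) ^ (-(min i (b + j))) := by
    rw [norm_mul, hb, hj, hi, ← zpow_add₀ p_ne, ← neg_add]
    exact zmax3 _ _ _ (hzm.trans (zle.2 (by omega)))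
  unfold LL
  simp only [mem_ofPred_eq, c1, c2]
  rw [hb, hj, hi, zle, zle, zle, zeq, zeq]
  constructor
  · rintro ⟨⟨h1, h2, h3, -⟩, -, h4, h5⟩
    exact ⟨h1, h2, h3, h4, h5⟩
  · rintro ⟨h1, h2, h3, h4, h5⟩
    exact ⟨⟨h1, h2, h3, hzm.trans (zle.2 (by omega))⟩, hP, h4, h5⟩

def M1 (α β et : ℤ) : ℤ := if et = 1 ∧ α = β then α + 1 else max α β

def cond1 (n α β er et : ℤ) : Prop := er ≤ α ∧ et ≤ β ∧ M1 α β et ≤ n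
def cond2 (n α β et : ℤ) : Prop := β ≤ α ∧ α < n ∧ et ≤ β ∧ et ≤ α - β
def cond3 (n α β er et : ℤ) : Prop := α ≤ β ∧ β < n ∧ er ≤ α ∧ et ≤ β - α

instance (n α β er et : ℤ) : Decidable (cond1 n α β er et) := by unfold cond1; infer_instance
instance (n α β et : ℤ) : Decidable (cond2 n α β et) := by unfold cond2; infer_instance
instance (n α β er et : ℤ) : Decidable (cond3 n α β er et) := by unfold cond3; infer_instance

lemma LL_eq (hp : Odd p) (D : ℚ_[p]) (hD : ‖D‖ = 1) (hDs : ¬ ∃ c, D = c ^ 2) (n α β er et : ℤ)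
    (her : er = 0 ∨ er = 1) (het : et = 0 ∨ et = 1) (hα : 0 ≤ α) (hβ : 0 ≤ β) :
    LL D n α β er et = (if cond1 n α β er et then FamA D n α β (M1 α β et) else ∅) ∪
      ((if cond2 n α β et then FamB D n (α - β) β (α + 1) else ∅) ∪
      (if cond3 n α β er et then FamC D n α (β - α) (β + 1) else ∅)) := by
  ext v
  by_cases hP : Pr v ∈ DD D n
  · obtain ⟨b, j, i, m, hb, hj, hi, hm, hmn, hz⟩ := vals hp D hD hDs n v hP
    rw [mem_LL D n α β er et b j i m v (by omega) (by omega) hP hb hj hi hm hmn hz]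
    have hA : v ∈ (if cond1 n α β er et then FamA D n α β (M1 α β et) else ∅) ↔
        cond1 n α β er et ∧ b = α ∧ i = β ∧ M1 α β et ≤ m := by
      split_ifs with h
      · unfold FamA; simp only [mem_ofPred_eq, hb, hi, zeq, hP, h, true_and, and_true, hz _ h.2.2]
      · simp [h]
    have hB : v ∈ (if cond2 n α β et then FamB D n (α - β) β (α + 1) else ∅) ↔
        cond2 n α β et ∧ j = α - β ∧ i = β ∧ α + 1 ≤ m := by
      split_ifs with h
      · unfold FamB
        simp only [mem_ofPred_eq, hj, hi, zeq, hP, h, true_and, and_true,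
          hz (α + 1) (by have := h.2.1; omega)]
      · simp [h]
    have hC : v ∈ (if cond3 n α β er et then FamC D n α (β - α) (β + 1) else ∅) ↔
        cond3 n α β er et ∧ b = α ∧ j = β - α ∧ β + 1 ≤ m := by
      split_ifs with h
      · unfold FamC
        simp only [mem_ofPred_eq, hj, hb, zeq, hP, h, true_and, and_true,
          hz (β + 1) (by have := h.2.1; omega)]
      · simp [h]
    rw [mem_union, mem_union, hA, hB, hC]
    unfold cond1 cond2 cond3 M1
    split_ifs <;> omega
  · constructor
    · intro h; exact absurd h.2.1 hP
    · rintro (h | h | h)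
      · split_ifs at h
        · exact absurd h.2.2.2 hP
        · exact h.elim
      · split_ifs at h
        · exact absurd h.2.2.2 hP
        · exact h.elim
      · split_ifs at h
        · exact absurd h.2.2.2 hP
        · exact h.elim

/-- volume of `LL` -/
noncomputable def LLv (p : ℕ) (n α β er et : ℤ) : ℝ :=
  uu p n * ((if cond1 n α β er et then (p : ℝ) ^ (-(M1 α β et)) else 0) +
    ((if cond2 n α β et then (p : ℝ) ^ (-(α + 1)) else 0) +
     (if cond3 n α β er et then (p : ℝ) ^ (-(β + 1)) else 0)))

lemma LLv_nonneg (n α β er et : ℤ) : 0 ≤ LLv p n α β er et := by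
  have := uu_pos (p := p) n
  have zp : ∀ m : ℤ, 0 ≤ (p : ℝ) ^ m := fun m => (zpow_pos p_pos m).le
  have := zp (-(M1 α β et))
  have := zp (-(α+1))
  have := zp (-(β+1))
  unfold LLv; positivity

lemma nu4_LL (hp : Odd p) (D : ℚ_[p]) (hD : ‖D‖ = 1) (hDs : ¬ ∃ c, D = c ^ 2) (n α β er et : ℤ)
    (her : er = 0 ∨ er = 1) (het : et = 0 ∨ et = 1) (hα : 0 ≤ α) (hβ : 0 ≤ β) :
    nu4 p (LL D n α β er et) = ENNReal.ofReal (LLv p n α β er et) := by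
  have zp : ∀ m : ℤ, 0 ≤ (p : ℝ) ^ m := fun m => (zpow_pos p_pos m).le
  have up := (uu_pos (p := p) n).le
  rw [LL_eq hp D hD hDs n α β er et her het hα hβ, measure_union, measure_union]
  · unfold LLv
    rw [mul_add, mul_add, ENNReal.ofReal_add, ENNReal.ofReal_add]
    · congr 1
      · split_ifs
        · exact nu4_FamA hp D hD hDs ..
        · simp
      congr 1
      · split_ifs
        · exact nu4_FamB hp D hD hDs ..
        · simp
      · split_ifs
        · exact nu4_FamC hp D hD hDs ..
        · simp
    · have := zp (-(α+1)); positivity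
    · have := zp (-(β+1)); positivity
    · have := zp (-(M1 α β et)); positivity
    · have := zp (-(α+1)); have := zp (-(β+1)); positivity
  · rw [Set.disjoint_left]
    intro v h1 h2
    split_ifs at h1 h2 with c1 c2
    · obtain ⟨b, j, i, m, hb, hj, hi, hm, hmn, hz⟩ := vals hp D hD hDs n v h1.2.2.2
      have e1 := h1.1; have e2 := h1.2.1
      have e3 := h2.1; have e4 := h2.2.1
      have e5 := (hz _ (by have := c1.2.1; omega)).1 h1.2.2.1
      rw [hb, zeq] at e3; rw [hj, zeq] at e1 e4; rw [hi, zeq] at e2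
      omega
    all_goals first | exact h1.elim | exact h2.elim
  · split_ifs
    · exact FamC_meas ..
    · exact MeasurableSet.empty
  · rw [Set.disjoint_left]
    intro v h1 h2
    split_ifs at h1 with c1
    · obtain ⟨b, j, i, m, hb, hj, hi, hm, hmn, hz⟩ := vals hp D hD hDs n v h1.2.2.2
      have e1 := h1.1; have e2 := h1.2.1
      rw [hb, zeq] at e1; rw [hi, zeq] at e2
      rcases h2 with h2 | h2
      · split_ifs at h2 with c2
        · have e3 := h2.1
          have e5 := (hz _ (by have := c2.2.1; omega)).1 h2.2.2.1
          rw [hj, zeq] at e3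
          omega
        · exact h2.elim
      · split_ifs at h2 with c2
        · have e3 := h2.2.1
          have e5 := (hz _ (by have := c2.2.1; omega)).1 h2.2.2.1
          rw [hj, zeq] at e3
          omega
        · exact h2.elim
    · exact h1.elim
  · refine MeasurableSet.union ?_ ?_
    · split_ifs
      · exact FamB_meas ..
      · exact MeasurableSet.empty
    · split_ifs
      · exact FamC_meas ..
      · exact MeasurableSet.empty

end four
end ZInt


namespace ZInt

open Metric Set

section ball
variable {p : ℕ} [hpf : Fact p.Prime]

lemma BB_add {k : ℤ} {x y : ℚ_[p]} (hx : x ∈ BB p k) (hy : y ∈ BB p k) : x + y ∈ BB p k := by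
  rw [mem_BB] at *
  exact (Padic.nonarchimedean x y).trans (max_le hx hy)

lemma BB_neg {k : ℤ} {x : ℚ_[p]} : -x ∈ BB p k ↔ x ∈ BB p k := by
  rw [mem_BB, mem_BB, norm_neg]

lemma BB_sub {k : ℤ} {x y : ℚ_[p]} (hx : x ∈ BB p k) (hy : y ∈ BB p k) : x - y ∈ BB p k := by
  rw [sub_eq_add_neg]; exact BB_add hx (BB_neg.2 hy)

lemma BB_sub_iff {k : ℤ} {x y : ℚ_[p]} (hy : y ∈ BB p k) : x - y ∈ BB p k ↔ x ∈ BB p k :=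
  ⟨fun h => by have := BB_add h hy; rwa [sub_add_cancel] at this, fun h => BB_sub h hy⟩

lemma BB_mono {k l : ℤ} (h : k ≤ l) {x : ℚ_[p]} (hx : x ∈ BB p l) : x ∈ BB p k := by
  rw [mem_BB] at *; exact hx.trans (zle.2 h)

lemma BB_mul {k : ℤ} {x y : ℚ_[p]} (hx : x ∈ BB p 0) (hy : y ∈ BB p k) : x * y ∈ BB p k := by
  rw [mem_BB] at *
  rw [norm_mul]
  simp only [neg_zero, zpow_zero] at hx
  exact (mul_le_of_le_one_left (norm_nonneg _) hx).trans hy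

lemma BB_mul' {k : ℤ} {x y : ℚ_[p]} (hx : x ∈ BB p k) (hy : y ∈ BB p 0) : x * y ∈ BB p k := by
  rw [mul_comm]; exact BB_mul hy hx

lemma BB_div {k : ℤ} {x e : ℚ_[p]} (he : ‖e‖ = 1) : x / e ∈ BB p k ↔ x ∈ BB p k := by
  rw [mem_BB, mem_BB, norm_div, he, div_one]

lemma BB_umul {k : ℤ} {x e : ℚ_[p]} (he : ‖e‖ = 1) : e * x ∈ BB p k ↔ x ∈ BB p k := by
  rw [mem_BB, mem_BB, norm_mul, he, one_mul]

lemma SS0_iff {x : ℚ_[p]} : ‖x‖ = 1 ↔ x ∈ BB p 0 ∧ x ∉ BB p 1 := by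
  rw [mem_BB, mem_BB]
  simp only [neg_zero, zpow_zero]
  rw [← lt_one_iff_le]
  constructor
  · intro h; rw [h]; simp
  · rintro ⟨h1, h2⟩; exact le_antisymm h1 (not_lt.1 h2)

lemma mcoord_le {t : ℚ_[p] × ℚ_[p] × ℚ_[p]} {r : ℝ} :
    mcoord t ≤ r ↔ ‖t.1‖ ≤ r ∧ ‖t.2.1‖ ≤ r ∧ ‖t.2.2‖ ≤ r := by
  unfold mcoord; rw [max_le_iff, max_le_iff, and_assoc]

lemma mshear_le (k a b c : ℚ_[p]) (hk : ‖k‖ ≤ 1) :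
    mcoord (a, b + 2 * k * a, c + k * b + k ^ 2 * a) ≤ mcoord (a, b, c) := by
  obtain ⟨h1, h2, h3⟩ := mcoord_le.1 (le_refl (mcoord (a, b, c)))
  simp only at h1 h2 h3
  set r := mcoord (a, b, c)
  have m : ∀ e f : ℚ_[p], ‖e‖ ≤ 1 → ‖f‖ ≤ r → ‖e * f‖ ≤ r := fun e f he hf => by
    rw [norm_mul]; exact (mul_le_of_le_one_left (norm_nonneg _) he).trans hf
  have s : ∀ e f : ℚ_[p], ‖e‖ ≤ r → ‖f‖ ≤ r → ‖e + f‖ ≤ r := fun e f he hf =>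
    (Padic.nonarchimedean e f).trans (max_le he hf)
  have h2' : ‖(2 : ℚ_[p])‖ ≤ 1 := by
    have := Padic.norm_int_le_one (p := p) 2
    simpa using this
  refine mcoord_le.2 ⟨h1, s _ _ h2 (m _ _ ?_ h1), s _ _ (s _ _ h3 (m _ _ hk h2)) (m _ _ ?_ h1)⟩
  · rw [norm_mul]; exact mul_le_one₀ h2' (norm_nonneg _) hk
  · rw [norm_pow]; exact pow_le_one₀ (norm_nonneg _) hk

lemma mshear (k a b c : ℚ_[p]) (hk : ‖k‖ ≤ 1) :
    mcoord (a, b + 2 * k * a, c + k * b + k ^ 2 * a) = mcoord (a, b, c) := by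
  refine le_antisymm (mshear_le k a b c hk) ?_
  have := mshear_le (-k) a (b + 2 * k * a) (c + k * b + k ^ 2 * a) (by rwa [norm_neg])
  have e1 : b + 2 * k * a + 2 * -k * a = b := by ring
  have e2 : c + k * b + k ^ 2 * a + -k * (b + 2 * k * a) + (-k) ^ 2 * a = c := by ring
  rwa [e1, e2] at this

lemma mscale (e a b c : ℚ_[p]) : mcoord (e * a, e * b, e * c) = ‖e‖ * mcoord (a, b, c) := by
  unfold mcoord
  simp only [norm_mul]
  rw [mul_max_of_nonneg _ _ (norm_nonneg _), mul_max_of_nonneg _ _ (norm_nonneg _)]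

lemma mneg (a b c : ℚ_[p]) : mcoord (-a, -b, -c) = mcoord (a, b, c) := by
  simp [mcoord]

lemma mrev (a b c : ℚ_[p]) : mcoord (c, b, a) = mcoord (a, b, c) := by
  simp only [mcoord]; rw [max_right_comm, max_comm ‖c‖, max_right_comm]

lemma DD_scale (D e X : ℚ_[p]) (n k : ℤ) (he : ‖e‖ = (p : ℝ) ^ (-k)) :
    e ^ 2 * X ∈ DD D (n + k) ↔ X ∈ DD D n := by
  have he0 : e ≠ 0 := by
    rw [← norm_ne_zero_iff, he]; exact zpow_ne_zero _ p_ne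
  constructor
  · rintro ⟨c, hc, h⟩
    refine ⟨c / e, ?_, ?_⟩
    · rw [norm_div, hc, he, ← zpow_sub₀ p_ne]; congr 1; ring
    · field_simp; rw [mul_comm, h]
  · rintro ⟨c, hc, rfl⟩
    refine ⟨e * c, ?_, by ring⟩
    rw [norm_mul, he, hc, ← zpow_add₀ p_ne]; congr 1; ring

end ball

section eight
variable {p : ℕ} [hpf : Fact p.Prime]

/-- eight-dimensional space, coordinates `((c₀,n₁,n₂,n₃),(δ,x,y,z))` -/
abbrev W8 (p : ℕ) [Fact p.Prime] := K4 p × K4 p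

noncomputable def FF1 (w : W8 p) : ℚ_[p] × ℚ_[p] × ℚ_[p] :=
  (w.1.1 * w.2.1 - w.1.2.2.2 * w.1.2.2.1,
   (w.1.1 * w.2.2.2.2 - w.1.2.2.2 * w.2.2.2.1) + (w.1.2.1 * w.2.1 - w.2.2.1 * w.1.2.2.1),
   w.1.2.1 * w.2.2.2.2 - w.2.2.1 * w.2.2.2.1)

noncomputable def FF2 (w : W8 p) : ℚ_[p] × ℚ_[p] × ℚ_[p] :=
  (w.1.1 * w.2.2.2.1 - w.1.2.2.1 * w.1.2.1,
   (w.1.1 * w.2.2.2.2 - w.2.1 * w.1.2.1) + (w.1.2.2.2 * w.2.2.2.1 - w.1.2.2.1 * w.2.2.1),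
   w.1.2.2.2 * w.2.2.2.2 - w.2.1 * w.2.2.1)

noncomputable def PP (w : W8 p) : ℚ_[p] := (FF1 w).2.1 ^ 2 - 4 * (FF1 w).1 * (FF1 w).2.2

/-- level set without integrality -/
def TT (D : ℚ_[p]) (n α β : ℤ) : Set (W8 p) :=
  {w | PP w ∈ DD D n ∧ mcoord (FF1 w) = (p : ℝ) ^ (-α) ∧ mcoord (FF2 w) = (p : ℝ) ^ (-β)}

lemma FF1_meas : Measurable (FF1 (p := p)) := by unfold FF1; fun_prop
lemma FF2_meas : Measurable (FF2 (p := p)) := by unfold FF2; fun_prop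
lemma PP_meas : Measurable (PP (p := p)) := by unfold PP FF1; fun_prop
lemma mcoord_meas : Measurable (mcoord (p := p)) := by unfold mcoord; fun_prop

lemma TT_meas (D : ℚ_[p]) (n α β : ℤ) : MeasurableSet (TT D n α β) := by
  refine (PP_meas (DD_meas D n)).inter (MeasurableSet.inter ?_ ?_)
  · exact (mcoord_meas.comp FF1_meas) (measurableSet_singleton ((p : ℝ) ^ (-α)))
  · exact (mcoord_meas.comp FF2_meas) (measurableSet_singleton ((p : ℝ) ^ (-β)))

/-- Haar measure -/
noncomputable def nu8 (p : ℕ) [Fact p.Prime] : Measure (W8 p) := (nu4 p).prod (nu4 p)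

instance nu8Haar : (nu8 p).IsAddHaarMeasure :=
  Measure.prod.instIsAddHaarMeasure (nu4 p) (nu4 p)

/-- box -/
def bx (k0 k1 k2 k3 k4 k5 k6 k7 : ℤ) : Set (W8 p) :=
  (BB p k0 ×ˢ BB p k1 ×ˢ BB p k2 ×ˢ BB p k3) ×ˢ (BB p k4 ×ˢ BB p k5 ×ˢ BB p k6 ×ˢ BB p k7)

lemma bx_meas (k0 k1 k2 k3 k4 k5 k6 k7 : ℤ) :
    MeasurableSet (bx (p := p) k0 k1 k2 k3 k4 k5 k6 k7) :=
  ((BB_meas _).prod ((BB_meas _).prod ((BB_meas _).prod (BB_meas _)))).prod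
    ((BB_meas _).prod ((BB_meas _).prod ((BB_meas _).prod (BB_meas _))))

lemma mem_bx (k0 k1 k2 k3 k4 k5 k6 k7 : ℤ) (w : W8 p) :
    w ∈ bx (p := p) k0 k1 k2 k3 k4 k5 k6 k7 ↔ (w.1.1 ∈ BB p k0 ∧ w.1.2.1 ∈ BB p k1 ∧
      w.1.2.2.1 ∈ BB p k2 ∧ w.1.2.2.2 ∈ BB p k3) ∧ (w.2.1 ∈ BB p k4 ∧ w.2.2.1 ∈ BB p k5 ∧
      w.2.2.2.1 ∈ BB p k6 ∧ w.2.2.2.2 ∈ BB p k7) := Iff.rfl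

/-- standard lattice -/
def L8 (p : ℕ) [Fact p.Prime] : Set (W8 p) := bx 0 0 0 0 0 0 0 0

lemma nu8_bx (k : ℤ) : nu8 p (bx k k k k k k k k) = ENNReal.ofReal ((p : ℝ) ^ (-k)) ^ 8 := by
  unfold nu8 bx
  rw [Measure.prod_prod, nu4_box, nu_BB]; ring

lemma nu8_L8 : nu8 p (L8 p) = 1 := by
  rw [L8, nu8_bx]; simp

lemma nu8_pres (φ : W8 p ≃ₜ+ W8 p) (h : φ ⁻¹' (L8 p) = L8 p) (S : Set (W8 p))
    (hS : MeasurableSet S) : nu8 p (φ ⁻¹' S) = nu8 p S :=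
  haar_pres (nu8 p) (nu8 p) φ (L8 p) (bx_meas ..) (by rw [h, nu8_L8]) nu8_L8 S hS

/-- swap `R₁,R₂` -/
def sgT : W8 p ≃ₜ+ W8 p where
  toFun w := ((w.1.2.1, w.1.1, w.2.2.2.1, w.2.2.1), (w.2.2.2.2, w.1.2.2.2, w.1.2.2.1, w.2.1))
  invFun w := ((w.1.2.1, w.1.1, w.2.2.2.1, w.2.2.1), (w.2.2.2.2, w.1.2.2.2, w.1.2.2.1, w.2.1))
  left_inv v := rfl
  right_inv v := rfl
  map_add' v w := rfl
  continuous_toFun := by fun_prop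
  continuous_invFun := by fun_prop

/-- swap rows -/
def sgR : W8 p ≃ₜ+ W8 p where
  toFun w := ((w.1.2.2.1, w.2.2.2.1, w.1.1, w.2.1), (w.1.2.2.2, w.2.2.2.2, w.1.2.1, w.2.2.1))
  invFun w := ((w.1.2.2.1, w.2.2.2.1, w.1.1, w.2.1), (w.1.2.2.2, w.2.2.2.2, w.1.2.1, w.2.2.1))
  left_inv v := rfl
  right_inv v := rfl
  map_add' v w := rfl
  continuous_toFun := by fun_prop
  continuous_invFun := by fun_prop

/-- swap columns -/
def sgC : W8 p ≃ₜ+ W8 p where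
  toFun w := ((w.1.2.2.2, w.2.2.1, w.2.1, w.1.1), (w.1.2.2.1, w.1.2.1, w.2.2.2.2, w.2.2.2.1))
  invFun w := ((w.1.2.2.2, w.2.2.1, w.2.1, w.1.1), (w.1.2.2.1, w.1.2.1, w.2.2.2.2, w.2.2.2.1))
  left_inv v := rfl
  right_inv v := rfl
  map_add' v w := rfl
  continuous_toFun := by fun_prop
  continuous_invFun := by fun_prop

lemma sgT_apply (c n1 n2 n3 d x y z : ℚ_[p]) :
    sgT ((c, n1, n2, n3), (d, x, y, z)) = ((n1, c, y, x), (z, n3, n2, d)) := rfl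
lemma sgR_apply (c n1 n2 n3 d x y z : ℚ_[p]) :
    sgR ((c, n1, n2, n3), (d, x, y, z)) = ((n2, y, c, d), (n3, z, n1, x)) := rfl
lemma sgC_apply (c n1 n2 n3 d x y z : ℚ_[p]) :
    sgC ((c, n1, n2, n3), (d, x, y, z)) = ((n3, x, d, c), (n2, n1, z, y)) := rfl

lemma TT_congr (D : ℚ_[p]) (n α β : ℤ) (w w' : W8 p) (h : PP w = PP w')
    (h1 : mcoord (FF1 w) = mcoord (FF1 w')) (h2 : mcoord (FF2 w) = mcoord (FF2 w')) :
    w ∈ TT D n α β ↔ w' ∈ TT D n α β := by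
  unfold TT; simp only [mem_ofPred_eq, h, h1, h2]

lemma TT_T (D : ℚ_[p]) (n α β : ℤ) (w : W8 p) : sgT w ∈ TT D n α β ↔ w ∈ TT D n α β := by
  obtain ⟨⟨c, n1, n2, n3⟩, d, x, y, z⟩ := w
  rw [sgT_apply]
  apply TT_congr
  · simp only [PP, FF1]; ring
  · rw [← mrev]; simp only [FF1]; congr 3 <;> ring
  · rw [← mneg]; simp only [FF2]; congr 3 <;> ring

lemma TT_R (D : ℚ_[p]) (n α β : ℤ) (w : W8 p) : sgR w ∈ TT D n α β ↔ w ∈ TT D n α β := by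
  obtain ⟨⟨c, n1, n2, n3⟩, d, x, y, z⟩ := w
  rw [sgR_apply]
  apply TT_congr
  · simp only [PP, FF1]; ring
  · rw [← mneg]; simp only [FF1]; congr 3 <;> ring
  · rw [← mneg]; simp only [FF2]; congr 3 <;> ring

lemma TT_C (D : ℚ_[p]) (n α β : ℤ) (w : W8 p) : sgC w ∈ TT D n α β ↔ w ∈ TT D n α β := by
  obtain ⟨⟨c, n1, n2, n3⟩, d, x, y, z⟩ := w
  rw [sgC_apply]
  apply TT_congr
  · simp only [PP, FF1]; ring
  · rw [← mneg]; simp only [FF1]; congr 3 <;> ring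
  · rw [← mrev]; simp only [FF2]; congr 3 <;> ring

lemma sgT_L : sgT ⁻¹' (L8 p) = L8 p := by
  ext ⟨⟨c, n1, n2, n3⟩, d, x, y, z⟩
  rw [mem_preimage, sgT_apply, L8, mem_bx, mem_bx]; tauto
lemma sgR_L : sgR ⁻¹' (L8 p) = L8 p := by
  ext ⟨⟨c, n1, n2, n3⟩, d, x, y, z⟩
  rw [mem_preimage, sgR_apply, L8, mem_bx, mem_bx]; tauto
lemma sgC_L : sgC ⁻¹' (L8 p) = L8 p := by
  ext ⟨⟨c, n1, n2, n3⟩, d, x, y, z⟩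
  rw [mem_preimage, sgC_apply, L8, mem_bx, mem_bx]; tauto

/-- integral level set -/
def ST (D : ℚ_[p]) (n α β : ℤ) : Set (W8 p) := TT D n α β ∩ L8 p

def X0 (D : ℚ_[p]) (n α β : ℤ) : Set (W8 p) := (TT D n α β ∩ L8 p) \ bx 1 1 1 1 1 1 1 1
def X1 (D : ℚ_[p]) (n α β a : ℤ) : Set (W8 p) :=
  (TT D n α β ∩ bx 0 a 0 0 0 a a a) \ bx 1 a 1 1 1 a a a
def X2 (D : ℚ_[p]) (n α β a b : ℤ) : Set (W8 p) :=
  (TT D n α β ∩ bx 0 a b 0 b a a a) \ bx 1 a b 1 b a a a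
def X3 (D : ℚ_[p]) (n α β a b c : ℤ) : Set (W8 p) :=
  (TT D n α β ∩ bx 0 a b c b a a a) \ bx 1 a b c b a a a

lemma X1_meas (D : ℚ_[p]) (n α β a : ℤ) : MeasurableSet (X1 D n α β a) :=
  ((TT_meas ..).inter (bx_meas ..)).diff (bx_meas ..)
lemma X2_meas (D : ℚ_[p]) (n α β a b : ℤ) : MeasurableSet (X2 D n α β a b) :=
  ((TT_meas ..).inter (bx_meas ..)).diff (bx_meas ..)
lemma X3_meas (D : ℚ_[p]) (n α β a b c : ℤ) : MeasurableSet (X3 D n α β a b c) :=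
  ((TT_meas ..).inter (bx_meas ..)).diff (bx_meas ..)

lemma split_gen (A B C : Set (W8 p)) (φ : W8 p ≃ₜ+ W8 p) (hφ : φ ⁻¹' (L8 p) = L8 p)
    (hC : MeasurableSet C) (h : ∀ w, w ∈ A ↔ (w ∈ B ∨ φ w ∈ C)) (hd : ∀ w, w ∈ B → φ w ∉ C) :
    nu8 p A = nu8 p B + nu8 p C := by
  have : A = B ∪ φ ⁻¹' C := by ext w; exact h w
  rw [this, measure_union ?_ ((show Measurable φ from φ.continuous.measurable) hC), nu8_pres φ hφ C hC]
  rw [Set.disjoint_left]; exact hd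

lemma bb10 (x : ℚ_[p]) : x ∈ BB p 1 → x ∈ BB p 0 := BB_mono (by norm_num)

lemma log_split (T E P0 P1 Q0 Q1 : Prop) (hP : P1 → P0) (hQ : Q1 → Q0) :
    ((T ∧ (E ∧ P0 ∧ Q0)) ∧ ¬ (E ∧ P1 ∧ Q1)) ↔
      (((T ∧ (E ∧ P0 ∧ Q0)) ∧ ¬ (E ∧ P1 ∧ Q0)) ∨ ((T ∧ (E ∧ Q0 ∧ P1)) ∧ ¬ (E ∧ Q1 ∧ P1))) := by
  by_cases P0 <;> by_cases P1 <;> by_cases Q0 <;> by_cases Q1 <;> by_cases E <;> simp_all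

lemma log_disj (T E P0 P1 Q0 Q1 : Prop) 
    (h : (T ∧ (E ∧ P0 ∧ Q0)) ∧ ¬ (E ∧ P1 ∧ Q0)) : ¬ ((T ∧ (E ∧ Q0 ∧ P1)) ∧ ¬ (E ∧ Q1 ∧ P1)) := by
  by_cases P0 <;> by_cases P1 <;> by_cases Q0 <;> by_cases Q1 <;> by_cases E <;> simp_all

lemma split_log (A B C : Set (W8 p)) (φ : W8 p ≃ₜ+ W8 p) (hφ : φ ⁻¹' (L8 p) = L8 p)
    (hC : MeasurableSet C) (T E P0 P1 Q0 Q1 : W8 p → Prop)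
    (hP : ∀ w, P1 w → P0 w) (hQ : ∀ w, Q1 w → Q0 w)
    (hA : ∀ w, w ∈ A ↔ (T w ∧ (E w ∧ P0 w ∧ Q0 w)) ∧ ¬ (E w ∧ P1 w ∧ Q1 w))
    (hB : ∀ w, w ∈ B ↔ (T w ∧ (E w ∧ P0 w ∧ Q0 w)) ∧ ¬ (E w ∧ P1 w ∧ Q0 w))
    (hC' : ∀ w, φ w ∈ C ↔ (T w ∧ (E w ∧ Q0 w ∧ P1 w)) ∧ ¬ (E w ∧ Q1 w ∧ P1 w)) :
    nu8 p A = nu8 p B + nu8 p C := by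
  refine split_gen A B C φ hφ hC (fun w => ?_) (fun w => ?_)
  · rw [hA, hB, hC']; exact log_split _ _ _ _ _ _ (hP w) (hQ w)
  · rw [hB, hC']; exact log_disj _ _ _ _ _ _

lemma diff_congr {T : Set (W8 p)} {B B' : Set (W8 p)} {w w' : W8 p} {P Q : Prop}
    (hT : w' ∈ T ↔ w ∈ T) (hB : w' ∈ B ↔ P) (hB' : w' ∈ B' ↔ Q) :
    w' ∈ (T ∩ B) \ B' ↔ (w ∈ T ∧ P) ∧ ¬ Q := by
  rw [mem_sdiff, mem_inter_iff, hT, hB, hB']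

lemma split0 (D : ℚ_[p]) (n α β : ℤ) :
    nu8 p (X0 D n α β) = nu8 p (X1 D n α β 0) + nu8 p (X1 D n α β 1) := by
  refine split_log _ _ _ sgT sgT_L (X1_meas ..) (fun w => w ∈ TT D n α β)
    (fun w => True)
    (fun w => w.1.1 ∈ BB p 0 ∧ w.1.2.2.1 ∈ BB p 0 ∧ w.1.2.2.2 ∈ BB p 0 ∧ w.2.1 ∈ BB p 0) (fun w => w.1.1 ∈ BB p 1 ∧ w.1.2.2.1 ∈ BB p 1 ∧ w.1.2.2.2 ∈ BB p 1 ∧ w.2.1 ∈ BB p 1)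
    (fun w => w.1.2.1 ∈ BB p 0 ∧ w.2.2.1 ∈ BB p 0 ∧ w.2.2.2.1 ∈ BB p 0 ∧ w.2.2.2.2 ∈ BB p 0) (fun w => w.1.2.1 ∈ BB p 1 ∧ w.2.2.1 ∈ BB p 1 ∧ w.2.2.2.1 ∈ BB p 1 ∧ w.2.2.2.2 ∈ BB p 1)
    (fun w => ?_) (fun w => ?_) (fun w => diff_congr Iff.rfl ?_ ?_)
    (fun w => diff_congr Iff.rfl ?_ ?_) (fun w => diff_congr (TT_T D n α β w) ?_ ?_)
  · have := bb10 (p := p); grind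
  · have := bb10 (p := p); grind
  all_goals
    obtain ⟨⟨c, n1, n2, n3⟩, d, x, y, z⟩ := w
    simp only [sgT_apply, L8, mem_bx]
    grind

lemma split1 (D : ℚ_[p]) (n α β a : ℤ) :
    nu8 p (X1 D n α β a) = nu8 p (X2 D n α β a 0) + nu8 p (X2 D n α β a 1) := by
  refine split_log _ _ _ sgR sgR_L (X2_meas ..) (fun w => w ∈ TT D n α β)
    (fun w => w.1.2.1 ∈ BB p a ∧ w.2.2.1 ∈ BB p a ∧ w.2.2.2.1 ∈ BB p a ∧ w.2.2.2.2 ∈ BB p a)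
    (fun w => w.1.1 ∈ BB p 0 ∧ w.1.2.2.2 ∈ BB p 0) (fun w => w.1.1 ∈ BB p 1 ∧ w.1.2.2.2 ∈ BB p 1)
    (fun w => w.1.2.2.1 ∈ BB p 0 ∧ w.2.1 ∈ BB p 0) (fun w => w.1.2.2.1 ∈ BB p 1 ∧ w.2.1 ∈ BB p 1)
    (fun w => ?_) (fun w => ?_) (fun w => diff_congr Iff.rfl ?_ ?_)
    (fun w => diff_congr Iff.rfl ?_ ?_) (fun w => diff_congr (TT_R D n α β w) ?_ ?_)
  · have := bb10 (p := p); grind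
  · have := bb10 (p := p); grind
  all_goals
    obtain ⟨⟨c, n1, n2, n3⟩, d, x, y, z⟩ := w
    simp only [sgR_apply, L8, mem_bx]
    grind

lemma split2 (D : ℚ_[p]) (n α β a b : ℤ) :
    nu8 p (X2 D n α β a b) = nu8 p (X3 D n α β a b 0) + nu8 p (X3 D n α β a b 1) := by
  refine split_log _ _ _ sgC sgC_L (X3_meas ..) (fun w => w ∈ TT D n α β)
    (fun w => w.1.2.1 ∈ BB p a ∧ w.2.2.1 ∈ BB p a ∧ w.2.2.2.1 ∈ BB p a ∧ w.2.2.2.2 ∈ BB p a ∧ w.1.2.2.1 ∈ BB p b ∧ w.2.1 ∈ BB p b)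
    (fun w => w.1.1 ∈ BB p 0) (fun w => w.1.1 ∈ BB p 1)
    (fun w => w.1.2.2.2 ∈ BB p 0) (fun w => w.1.2.2.2 ∈ BB p 1)
    (fun w => ?_) (fun w => ?_) (fun w => diff_congr Iff.rfl ?_ ?_)
    (fun w => diff_congr Iff.rfl ?_ ?_) (fun w => diff_congr (TT_C D n α β w) ?_ ?_)
  · have := bb10 (p := p); grind
  · have := bb10 (p := p); grind
  all_goals
    obtain ⟨⟨c, n1, n2, n3⟩, d, x, y, z⟩ := w
    simp only [sgC_apply, L8, mem_bx]
    grind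

end eight
end ZInt


namespace ZInt

open Metric Set

section fibre
variable {p : ℕ} [hpf : Fact p.Prime]

lemma LL_meas (D : ℚ_[p]) (n α β er et : ℤ) : MeasurableSet (LL D n α β er et) := by
  have hb : MeasurableSet (BB p er ×ˢ BB p et ×ˢ BB p et ×ˢ BB p et) :=
    (BB_meas _).prod ((BB_meas _).prod ((BB_meas _).prod (BB_meas _)))
  have h1 : Measurable (fun v : K4 p => max (max ‖v.1‖ ‖v.2.2.2‖) ‖v.2.1 * v.2.2.1‖) := by fun_prop
  have h2 : Measurable (fun v : K4 p => max (max ‖v.2.2.1‖ ‖v.2.2.2‖) ‖v.1 * v.2.1‖) := by fun_prop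
  exact hb.inter ((Pr_cont.measurable (DD_meas D n)).inter
    ((h1 (measurableSet_singleton ((p : ℝ) ^ (-α)))).inter
      (h2 (measurableSet_singleton ((p : ℝ) ^ (-β))))))

/-- linear part of the reduction map -/
noncomputable def phiU (c k1 k2 k3 : ℚ_[p]) (hc : c ≠ 0) : K4 p ≃ₜ+ K4 p where
  toFun v := (v.1 / c, v.2.1 / c, v.2.2.1 / c,
    (v.2.2.2 - (k1 * v.1 + k2 * v.2.1 + k3 * v.2.2.1)) / c)
  invFun v := (c * v.1, c * v.2.1, c * v.2.2.1,
    c * (v.2.2.2 + (k1 * v.1 + k2 * v.2.1 + k3 * v.2.2.1)))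
  left_inv v := by
    ext <;> simp only <;> field_simp
    ring
  right_inv v := by
    ext <;> simp only <;> field_simp
    ring
  map_add' v w := by
    ext <;> simp only [Prod.fst_add, Prod.snd_add] <;> ring
  continuous_toFun := by fun_prop
  continuous_invFun := by fun_prop

lemma phiU_L (c k1 k2 k3 : ℚ_[p]) (hc : c ≠ 0) (hc1 : ‖c‖ = 1) (h1 : k1 ∈ BB p 0)
    (h2 : k2 ∈ BB p 0) (h3 : k3 ∈ BB p 0) : phiU c k1 k2 k3 hc ⁻¹' (L4 p) = L4 p := by
  ext ⟨d, x, y, z⟩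
  change (d / c ∈ BB p 0 ∧ x / c ∈ BB p 0 ∧ y / c ∈ BB p 0 ∧
    (z - (k1 * d + k2 * x + k3 * y)) / c ∈ BB p 0) ↔
    (d ∈ BB p 0 ∧ x ∈ BB p 0 ∧ y ∈ BB p 0 ∧ z ∈ BB p 0)
  simp only [BB_div hc1]
  constructor
  · rintro ⟨hd, hx, hy, hz⟩
    exact ⟨hd, hx, hy, (BB_sub_iff (BB_add (BB_add (BB_mul h1 hd) (BB_mul h2 hx))
      (BB_mul h3 hy))).1 hz⟩
  · rintro ⟨hd, hx, hy, hz⟩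
    exact ⟨hd, hx, hy, (BB_sub_iff (BB_add (BB_add (BB_mul h1 hd) (BB_mul h2 hx))
      (BB_mul h3 hy))).2 hz⟩

lemma mss (e k a b c : ℚ_[p]) (he : ‖e‖ = 1) (hk : ‖k‖ ≤ 1) :
    mcoord (e ^ 2 * a, e ^ 2 * (b + 2 * k * a), e ^ 2 * (c + k * b + k ^ 2 * a)) =
      mcoord (a, b, c) := by
  rw [mscale, mshear k a b c hk, norm_pow, he, one_pow, one_mul]

set_option maxHeartbeats 1000000 in
/-- `(c,n)` reduces the cube to normal form; the level set matches `LL`. -/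
lemma fibre_iff (D : ℚ_[p]) (n α β a b c : ℤ) (ha : 0 ≤ a) (hb : 0 ≤ b) (hc : 0 ≤ c)
    (e n1 n2 n3 d x y z : ℚ_[p]) (he : ‖e‖ = 1) (h1 : n1 ∈ BB p a) (h2 : n2 ∈ BB p b)
    (h3 : n3 ∈ BB p c) :
    (((e, n1, n2, n3), (d, x, y, z)) : W8 p) ∈ X3 D n α β a b c ↔
      ((d / e - n2 / e * (n3 / e), x / e - n1 / e * (n3 / e), y / e - n1 / e * (n2 / e),
        (z - (n1 / e * d + n2 / e * x + n3 / e * y)) / e + 2 * (n1 / e) * (n2 / e) * (n3 / e)) : K4 p)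
        ∈ LL D n α β b a := by
  have he0 : e ≠ 0 := by rw [← norm_ne_zero_iff, he]; norm_num
  have g1 : n1 / e ∈ BB p a := (BB_div he).2 h1
  have g2 : n2 / e ∈ BB p b := (BB_div he).2 h2
  have g3 : n3 / e ∈ BB p 0 := (BB_div he).2 (BB_mono hc h3)
  have g1' := BB_mono ha g1
  have g2' := BB_mono hb g2
  set k1 := n1 / e with hk1
  set k2 := n2 / e with hk2
  set k3 := n3 / e with hk3
  have r1 : n1 = e * k1 := by rw [hk1]; field_simp
  have r2 : n2 = e * k2 := by rw [hk2]; field_simp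
  have r3 : n3 = e * k3 := by rw [hk3]; field_simp
  obtain ⟨d', rd⟩ : ∃ d', d = e * d' := ⟨d / e, by field_simp⟩
  obtain ⟨x', rx⟩ : ∃ d', x = e * d' := ⟨x / e, by field_simp⟩
  obtain ⟨y', ry⟩ : ∃ d', y = e * d' := ⟨y / e, by field_simp⟩
  obtain ⟨z', rz⟩ : ∃ d', z = e * d' := ⟨z / e, by field_simp⟩
  clear_value k1 k2 k3
  clear hk1 hk2 hk3
  subst r1 r2 r3 rd rx ry rz
  have q1 : e * d' / e = d' := by field_simp
  have q2 : e * x' / e = x' := by field_simp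
  have q3 : e * y' / e = y' := by field_simp
  have q4 : (e * z' - (k1 * (e * d') + k2 * (e * x') + k3 * (e * y'))) / e =
    z' - (k1 * d' + k2 * x' + k3 * y') := by field_simp
  rw [q1, q2, q3, q4]
  have F1 : mcoord (FF1 ((e, e * k1, e * k2, e * k3), (e * d', e * x', e * y', e * z'))) =
      mcoord (d' - k2 * k3, z' - (k1 * d' + k2 * x' + k3 * y') + 2 * k1 * k2 * k3,
        - ((x' - k1 * k3) * (y' - k1 * k2))) := by
    rw [← mss e k1 (d' - k2 * k3) _ _ he (by simpa [mem_BB] using g1')]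
    simp only [FF1]
    congr 3 <;> ring
  have F2 : mcoord (FF2 ((e, e * k1, e * k2, e * k3), (e * d', e * x', e * y', e * z'))) =
      mcoord (y' - k1 * k2, z' - (k1 * d' + k2 * x' + k3 * y') + 2 * k1 * k2 * k3,
        - ((d' - k2 * k3) * (x' - k1 * k3))) := by
    rw [← mss e k3 (y' - k1 * k2) _ _ he (by simpa [mem_BB] using g3)]
    simp only [FF2]
    congr 3 <;> ring
  have hP : PP ((e, e * k1, e * k2, e * k3), (e * d', e * x', e * y', e * z')) =
      (e ^ 2) ^ 2 * Pr (d' - k2 * k3, x' - k1 * k3, y' - k1 * k2,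
        z' - (k1 * d' + k2 * x' + k3 * y') + 2 * k1 * k2 * k3) := by
    simp only [PP, FF1, Pr]; ring
  have hDD := DD_scale D (e ^ 2) (Pr (d' - k2 * k3, x' - k1 * k3, y' - k1 * k2,
        z' - (k1 * d' + k2 * x' + k3 * y') + 2 * k1 * k2 * k3)) n 0 (by simp [he])
  rw [add_zero] at hDD
  have B1 : d' - k2 * k3 ∈ BB p b ↔ d' ∈ BB p b := BB_sub_iff (BB_mul' g2 g3)
  have B2 : x' - k1 * k3 ∈ BB p a ↔ x' ∈ BB p a := BB_sub_iff (BB_mul' g1 g3)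
  have B3 : y' - k1 * k2 ∈ BB p a ↔ y' ∈ BB p a := BB_sub_iff (BB_mul' g1 g2')
  have B4 : d' ∈ BB p b → x' ∈ BB p a → y' ∈ BB p a →
      (z' - (k1 * d' + k2 * x' + k3 * y') + 2 * k1 * k2 * k3 ∈ BB p a ↔ z' ∈ BB p a) := by
    intro hd hx hy
    have : z' - (k1 * d' + k2 * x' + k3 * y') + 2 * k1 * k2 * k3 =
      z' - (((k1 * d' + k2 * x' + k3 * y') - k1 * k2 * k3) - k1 * k2 * k3) := by ring
    rw [this]
    have t := BB_mul' (BB_mul' g1 g2') g3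
    exact BB_sub_iff (BB_sub (BB_sub (BB_add (BB_add (BB_mul' g1 (BB_mono hb hd)) (BB_mul g2' hx))
      (BB_mul g3 hy)) t) t)
  have E : ((d' - k2 * k3 ∈ BB p b ∧ x' - k1 * k3 ∈ BB p a ∧ y' - k1 * k2 ∈ BB p a ∧
      z' - (k1 * d' + k2 * x' + k3 * y') + 2 * k1 * k2 * k3 ∈ BB p a) ↔
      (d' ∈ BB p b ∧ x' ∈ BB p a ∧ y' ∈ BB p a ∧ z' ∈ BB p a)) := by
    rw [B1, B2, B3]
    constructor
    · rintro ⟨hd, hx, hy, hz⟩; exact ⟨hd, hx, hy, (B4 hd hx hy).1 hz⟩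
    · rintro ⟨hd, hx, hy, hz⟩; exact ⟨hd, hx, hy, (B4 hd hx hy).2 hz⟩
  have hL : ∀ D1 X1 Y1 Z1 : ℚ_[p], ((D1, X1, Y1, Z1) : K4 p) ∈ LL D n α β b a ↔
      (D1 ∈ BB p b ∧ X1 ∈ BB p a ∧ Y1 ∈ BB p a ∧ Z1 ∈ BB p a) ∧ Pr (D1, X1, Y1, Z1) ∈ DD D n ∧
      mcoord (D1, Z1, -(X1 * Y1)) = (p : ℝ) ^ (-α) ∧
      mcoord (Y1, Z1, -(D1 * X1)) = (p : ℝ) ^ (-β) := by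
    intro D1 X1 Y1 Z1
    simp only [mcoord, norm_neg]
    exact Iff.rfl
  rw [hL, E, ← F1, ← F2, ← hDD, ← hP]
  have he' := SS0_iff.1 he
  simp only [X3, mem_sdiff, mem_inter_iff, mem_bx, h1, h2, h3, he'.1, he'.2, false_and,
    not_false_iff, and_true, true_and, BB_umul he, TT, mem_ofPred_eq]
  tauto

lemma nu8_X3 (hp : Odd p) (D : ℚ_[p]) (hD : ‖D‖ = 1) (hDs : ¬ ∃ c, D = c ^ 2)
    (n α β a b c : ℤ) (ha : a = 0 ∨ a = 1) (hb : b = 0 ∨ b = 1) (hc : 0 ≤ c) (hα : 0 ≤ α)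
    (hβ : 0 ≤ β) :
    nu8 p (X3 D n α β a b c) = ENNReal.ofReal ((1 - (p : ℝ)⁻¹) * ((p : ℝ) ^ (-a) *
      ((p : ℝ) ^ (-b) * (p : ℝ) ^ (-c))) * LLv p n α β b a) := by
  have zp : ∀ m : ℤ, 0 ≤ (p : ℝ) ^ m := fun m => (zpow_pos p_pos m).le
  unfold nu8
  rw [prod_const _ _ _ (X3_meas ..) (SS p 0 ×ˢ BB p a ×ˢ BB p b ×ˢ BB p c)
    ((SS_meas _).prod ((BB_meas _).prod ((BB_meas _).prod (BB_meas _))))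
    (ENNReal.ofReal (LLv p n α β b a)), nu4_box, nu_SS, nu_BB, nu_BB, nu_BB,
    ← ENNReal.ofReal_mul (zp _), ← ENNReal.ofReal_mul (zp _), ← ENNReal.ofReal_mul,
    ← ENNReal.ofReal_mul]
  · simp
  · have := zp (-a); have := zp (-b); have := zp (-c); have := one_sub_pos (p := p)
    have := zp (-0)
    positivity
  · have := one_sub_pos (p := p)
    have := zp (-0)
    positivity
  · rintro ⟨e, n1, n2, n3⟩ ⟨he, h1, h2, h3⟩
    have he : ‖e‖ = 1 := by simpa [mem_SS] using he
    have he0 : e ≠ 0 := by rw [← norm_ne_zero_iff, he]; norm_num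
    simp only at h1 h2 h3
    rw [← nu4_LL hp D hD hDs n α β b a hb ha hα hβ]
    have e1 : Prod.mk (e, n1, n2, n3) ⁻¹' (X3 D n α β a b c) =
        phiU e (n1 / e) (n2 / e) (n3 / e) he0 ⁻¹'
          ((fun v => ((- (n2 / e * (n3 / e)), - (n1 / e * (n3 / e)), - (n1 / e * (n2 / e)),
            2 * (n1 / e) * (n2 / e) * (n3 / e)) : K4 p) + v) ⁻¹' (LL D n α β b a)) := by
      ext ⟨d, x, y, z⟩
      rw [mem_preimage, fibre_iff D n α β a b c (by omega) (by omega) hc e n1 n2 n3 d x y z he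
        h1 h2 h3, mem_preimage, mem_preimage]
      apply iff_of_eq
      congr 1
      change _ = (_, _, _, _)
      simp only [phiU]
      refine Prod.ext ?_ (Prod.ext ?_ (Prod.ext ?_ ?_))
      · exact sub_eq_neg_add _ _
      · exact sub_eq_neg_add _ _
      · exact sub_eq_neg_add _ _
      · exact add_comm _ _
    rw [e1, nu4_pres _ (phiU_L _ _ _ _ he0 he ?_ ?_ ?_) _ ((measurable_const_add _) (LL_meas ..)),
      measure_preimage_add]
    · exact (BB_div he).2 (BB_mono (by omega) h1)
    · exact (BB_div he).2 (BB_mono (by omega) h2)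
    · exact (BB_div he).2 (BB_mono (by omega) h3)
  · rintro ⟨e, n1, n2, n3⟩ hn
    ext v
    simp only [mem_preimage, mem_empty_iff_false, iff_false]
    intro h
    apply hn
    simp only [X3, mem_sdiff, mem_inter_iff, mem_bx] at h
    obtain ⟨⟨-, ⟨h0, h1, h2, h3⟩, h4⟩, h5⟩ := h
    refine ⟨?_, h1, h2, h3⟩
    have : ‖e‖ = 1 := SS0_iff.2 ⟨h0, fun h6 => h5 ⟨⟨h6, h1, h2, h3⟩, h4⟩⟩
    simpa [mem_SS] using this

/-- sum entering the primitive volume -/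
noncomputable def YY (p : ℕ) (n α β er et : ℤ) : ℝ :=
  ((if cond1 n α β er et then (p : ℝ) ^ (-(M1 α β et)) else 0) +
    ((if cond2 n α β et then (p : ℝ) ^ (-(α + 1)) else 0) +
     (if cond3 n α β er et then (p : ℝ) ^ (-(β + 1)) else 0)))

noncomputable def bt (p : ℕ) (P : Prop) [Decidable P] : ℝ := if P then 1 + (p : ℝ)⁻¹ else 1

lemma prim_sum (n α β : ℤ) (hα : 0 ≤ α) (hβ : 0 ≤ β) (hα' : α ≤ n) (hβ' : β ≤ n) :
    YY p n α β 0 0 + (p : ℝ)⁻¹ * YY p n α β 1 0 + (p : ℝ)⁻¹ * YY p n α β 0 1 +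
      (p : ℝ)⁻¹ * (p : ℝ)⁻¹ * YY p n α β 1 1 =
    (p : ℝ) ^ (-(max α β)) * bt p (α < n) * bt p (β < n) * bt p (0 < min α β) := by
  have hs : ∀ m : ℤ, (p : ℝ) ^ (-(m + 1)) = (p : ℝ) ^ (-m) * (p : ℝ)⁻¹ := fun m => by
    rw [neg_add, zpow_add₀ p_ne, _root_.zpow_neg_one]
  rcases lt_trichotomy α β with h | h | h
  · have h1 : M1 α β 0 = β := by unfold M1; rw [if_neg (by omega)]; omega
    have h2 : M1 α β 1 = β := by unfold M1; rw [if_neg (by omega)]; omega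
    have h3 : max α β = β := by omega
    have h4 : min α β = α := by omega
    have h5 : α < n := by omega
    unfold YY cond1 cond2 cond3
    simp only [h1, h2, h3, h4, hs]
    by_cases e : 0 < α <;> by_cases f : β < n <;>
    · simp only [bt]
      repeat first
        | (rw [if_pos]; rotate_left; omega)
        | (rw [if_neg]; rotate_left; omega)
      ring
  · subst h
    have h1 : M1 α α 0 = α := by unfold M1; rw [if_neg (by omega)]; omega
    have h2 : M1 α α 1 = α + 1 := by unfold M1; rw [if_pos (by omega)]
    have h3 : max α α = α := by omega
    have h4 : min α α = α := by omega
    unfold YY cond1 cond2 cond3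
    simp only [h1, h2, h3, h4, hs]
    by_cases e : 0 < α <;> by_cases f : α < n <;>
    · simp only [bt]
      repeat first
        | (rw [if_pos]; rotate_left; omega)
        | (rw [if_neg]; rotate_left; omega)
      ring
  · have h1 : M1 α β 0 = α := by unfold M1; rw [if_neg (by omega)]; omega
    have h2 : M1 α β 1 = α := by unfold M1; rw [if_neg (by omega)]; omega
    have h3 : max α β = α := by omega
    have h4 : min α β = β := by omega
    have h5 : β < n := by omega
    unfold YY cond1 cond2 cond3
    simp only [h1, h2, h3, h4, hs]
    by_cases e : 0 < β <;> by_cases f : α < n <;>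
    · simp only [bt]
      repeat first
        | (rw [if_pos]; rotate_left; omega)
        | (rw [if_neg]; rotate_left; omega)
      ring

end fibre
end ZInt


namespace ZInt

open Metric Set

section vol
variable {p : ℕ} [hpf : Fact p.Prime]

lemma LLv_YY (n α β er et : ℤ) : LLv p n α β er et = uu p n * YY p n α β er et := rfl

lemma nu8_X0 (hp : Odd p) (D : ℚ_[p]) (hD : ‖D‖ = 1) (hDs : ¬ ∃ c, D = c ^ 2)
    (n α β : ℤ) (hα : 0 ≤ α) (hβ : 0 ≤ β) (hα' : α ≤ n) (hβ' : β ≤ n) :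
    nu8 p (X0 D n α β) = ENNReal.ofReal ((1 - (p : ℝ)⁻¹) * (1 + (p : ℝ)⁻¹) * uu p n *
      ((p : ℝ) ^ (-(max α β)) * bt p (α < n) * bt p (β < n) * bt p (0 < min α β))) := by
  have t0 : 0 ≤ (p : ℝ)⁻¹ := inv_nonneg.2 p_pos.le
  have h1 := one_sub_pos (p := p)
  have l00 := LLv_nonneg (p := p) n α β 0 0
  have l01 := LLv_nonneg (p := p) n α β 0 1
  have l10 := LLv_nonneg (p := p) n α β 1 0
  have l11 := LLv_nonneg (p := p) n α β 1 1
  rw [split0, split1, split1, split2, split2, split2, split2]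
  repeat rw [nu8_X3 hp D hD hDs n α β _ _ _ (by simp) (by simp) (by simp) hα hβ]
  simp only [neg_zero, zpow_zero, _root_.zpow_neg_one, one_mul, mul_one]
  repeat rw [← ENNReal.ofReal_add (by positivity) (by positivity)]
  congr 1
  rw [← prim_sum n α β hα hβ hα' hβ']
  simp only [LLv_YY]
  ring

lemma ST_empty (D : ℚ_[p]) (n α β : ℤ) (h : α < 0 ∨ β < 0) : ST D n α β = ∅ := by
  rw [Set.eq_empty_iff_forall_notMem]
  rintro ⟨⟨c, n1, n2, n3⟩, d, x, y, z⟩ ⟨⟨-, h1, h2⟩, h3⟩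
  rw [L8, mem_bx] at h3
  obtain ⟨⟨hc, g1, g2, g3⟩, hd, hx, hy, hz⟩ := h3
  simp only at *
  have key : ∀ r : ℤ, r < 0 → ∀ t : ℚ_[p] × ℚ_[p] × ℚ_[p], t.1 ∈ BB p 0 → t.2.1 ∈ BB p 0 →
      t.2.2 ∈ BB p 0 → mcoord t ≠ (p : ℝ) ^ (-r) := by
    intro r hr t a b c he
    have : mcoord t ≤ (p : ℝ) ^ (-0 : ℤ) := mcoord_le.2 ⟨a, b, c⟩
    rw [he, zle] at this
    omega
  rcases h with h | h
  · refine key α h _ ?_ ?_ ?_ h1 <;> simp only [FF1]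
    · exact BB_sub (BB_mul hc hd) (BB_mul g3 g2)
    · exact BB_add (BB_sub (BB_mul hc hz) (BB_mul g3 hy)) (BB_sub (BB_mul g1 hd) (BB_mul hx g2))
    · exact BB_sub (BB_mul g1 hz) (BB_mul hx hy)
  · refine key β h _ ?_ ?_ ?_ h2 <;> simp only [FF2]
    · exact BB_sub (BB_mul hc hy) (BB_mul g2 g1)
    · exact BB_add (BB_sub (BB_mul hc hz) (BB_mul hd g1)) (BB_sub (BB_mul g3 hy) (BB_mul g2 hx))
    · exact BB_sub (BB_mul g3 hz) (BB_mul hd hx)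

/-- scaling by `1/p` -/
noncomputable def sc8 : W8 p ≃ₜ+ W8 p where
  toFun w := (p : ℚ_[p])⁻¹ • w
  invFun w := (p : ℚ_[p]) • w
  left_inv v := by
    have : (p : ℚ_[p]) ≠ 0 := by exact_mod_cast hpf.out.ne_zero
    simp [smul_smul, this]
  right_inv v := by
    have : (p : ℚ_[p]) ≠ 0 := by exact_mod_cast hpf.out.ne_zero
    simp [smul_smul, this]
  map_add' v w := smul_add _ _ _
  continuous_toFun := by fun_prop
  continuous_invFun := by fun_prop

lemma BB_pinv (x : ℚ_[p]) (k : ℤ) : (p : ℚ_[p])⁻¹ * x ∈ BB p k ↔ x ∈ BB p (k + 1) := by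
  rw [mem_BB, mem_BB, norm_mul, norm_inv, Padic.norm_p, inv_inv, neg_add, zpow_add₀ p_ne,
    _root_.zpow_neg_one, ← div_eq_mul_inv, le_div_iff₀ p_pos, mul_comm]

lemma sc8_bx (k : ℤ) : sc8 ⁻¹' (bx (p := p) k k k k k k k k) =
    bx (k + 1) (k + 1) (k + 1) (k + 1) (k + 1) (k + 1) (k + 1) (k + 1) := by
  ext ⟨⟨c, n1, n2, n3⟩, d, x, y, z⟩
  simp only [mem_preimage, mem_bx, ← BB_pinv]
  exact Iff.rfl

lemma sc8_meas (S : Set (W8 p)) (hS : MeasurableSet S) :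
    nu8 p (sc8 ⁻¹' S) = ENNReal.ofReal ((p : ℝ)⁻¹ ^ 8) * nu8 p S := by
  obtain ⟨c, hc⟩ := exists_scale (nu8 p) (nu8 p) sc8
  have h := hc (L8 p) (bx_meas ..)
  rw [nu8_L8, mul_one, L8, sc8_bx, nu8_bx] at h
  rw [hc S hS, ← h, ENNReal.ofReal_pow (inv_nonneg.2 p_pos.le)]
  simp

lemma sc8_TT (D : ℚ_[p]) (n α β : ℤ) (w : W8 p) :
    sc8 w ∈ TT D (n - 2) (α - 2) (β - 2) ↔ w ∈ TT D n α β := by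
  have hp0 : (p : ℚ_[p]) ≠ 0 := by exact_mod_cast hpf.out.ne_zero
  obtain ⟨w, rfl⟩ : ∃ w', w = (p : ℚ_[p]) • w' := ⟨(p : ℚ_[p])⁻¹ • w, by simp [smul_smul, hp0]⟩
  have : sc8 ((p : ℚ_[p]) • w) = w := by
    change (p : ℚ_[p])⁻¹ • (p : ℚ_[p]) • w = w
    simp [smul_smul, hp0]
  rw [this]
  obtain ⟨⟨c, n1, n2, n3⟩, d, x, y, z⟩ := w
  set π : ℚ_[p] := (p : ℚ_[p]) with hπ
  have hn : ‖π ^ 2‖ = (p : ℝ) ^ (-2 : ℤ) := by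
    rw [norm_pow, hπ, Padic.norm_p, inv_pow, _root_.zpow_neg]; norm_cast
  have e : π • (((c, n1, n2, n3), d, x, y, z) : W8 p) =
    ((π * c, π * n1, π * n2, π * n3), π * d, π * x, π * y, π * z) := rfl
  have hP : PP ((π * c, π * n1, π * n2, π * n3), π * d, π * x, π * y, π * z) =
    (π ^ 2) ^ 2 * PP ((c, n1, n2, n3), d, x, y, z) := by simp only [PP, FF1]; ring
  have h1 : mcoord (FF1 ((π * c, π * n1, π * n2, π * n3), π * d, π * x, π * y, π * z)) =
    ‖π ^ 2‖ * mcoord (FF1 ((c, n1, n2, n3), d, x, y, z)) := by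
    rw [← mscale (π ^ 2)]; simp only [FF1]; congr 3 <;> ring
  have h2 : mcoord (FF2 ((π * c, π * n1, π * n2, π * n3), π * d, π * x, π * y, π * z)) =
    ‖π ^ 2‖ * mcoord (FF2 ((c, n1, n2, n3), d, x, y, z)) := by
    rw [← mscale (π ^ 2)]; simp only [FF2]; congr 3 <;> ring
  have hz : ∀ (r : ℝ) (k : ℤ), (p : ℝ) ^ (-2 : ℤ) * r = (p : ℝ) ^ (-k) ↔
      r = (p : ℝ) ^ (-(k - 2)) := by
    intro r k
    have : (p : ℝ) ^ (-k) = (p : ℝ) ^ (-2 : ℤ) * (p : ℝ) ^ (-(k - 2)) := by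
      rw [← zpow_add₀ p_ne]; congr 1; ring
    rw [this, mul_right_inj' (zpow_ne_zero _ p_ne)]
  have hd := DD_scale D (π ^ 2) (PP ((c, n1, n2, n3), d, x, y, z)) (n - 2) 2 hn
  rw [sub_add_cancel] at hd
  rw [e]
  simp only [TT, mem_ofPred_eq]
  rw [hP, h1, h2, hn, hz, hz, hd]

lemma ST_meas (D : ℚ_[p]) (n α β : ℤ) : MeasurableSet (ST D n α β) :=
  (TT_meas ..).inter (bx_meas ..)

lemma nu8_ST_rec (D : ℚ_[p]) (n α β : ℤ) : nu8 p (ST D n α β) =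
    nu8 p (X0 D n α β) + ENNReal.ofReal ((p : ℝ)⁻¹ ^ 8) * nu8 p (ST D (n - 2) (α - 2) (β - 2)) := by
  rw [← sc8_meas _ (ST_meas ..)]
  have : sc8 ⁻¹' (ST D (n - 2) (α - 2) (β - 2)) = ST D n α β ∩ bx 1 1 1 1 1 1 1 1 := by
    rw [ST, preimage_inter, L8, sc8_bx, ST]
    ext w
    simp only [mem_inter_iff, mem_preimage, sc8_TT, zero_add]
    constructor
    · rintro ⟨h1, h2⟩
      refine ⟨⟨h1, ?_⟩, h2⟩
      simp only [L8, mem_bx] at *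
      have := bb10 (p := p)
      grind
    · rintro ⟨⟨h1, -⟩, h2⟩; exact ⟨h1, h2⟩
  rw [this, add_comm]
  exact (measure_inter_add_sdiff _ (bx_meas ..)).symm

/-- constant -/
noncomputable def CC (p : ℕ) : ℝ := 1 / 2 * (1 - (p : ℝ)⁻¹) ^ 3 * (1 - (p : ℝ)⁻¹ ^ 2)

noncomputable def hh (p : ℕ) (l : ℕ) : ℝ := (p : ℝ) ^ l * bt p (0 < l)

noncomputable def vS (p n A B : ℕ) : ℝ :=
  if max A B ≤ n then CC p * (p : ℝ)⁻¹ ^ (3 * n) * hh p A * hh p B * (p : ℝ)⁻¹ ^ (max A B) *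
    ∑ i ∈ Finset.range (n - max A B + 1), (p : ℝ)⁻¹ ^ i else 0

lemma bt_pos (P : Prop) [Decidable P] : 0 < bt p P := by
  have t0 : 0 < (p : ℝ)⁻¹ := inv_pos.2 p_pos
  unfold bt; split_ifs <;> positivity

lemma hh_pos (l : ℕ) : 0 < hh p l := mul_pos (pow_pos p_pos _) (bt_pos _)

lemma CC_pos : 0 < CC p := by
  have h1 := one_sub_pos (p := p)
  have t0 : 0 < (p : ℝ)⁻¹ := inv_pos.2 p_pos
  have : 1 - (p : ℝ)⁻¹ ^ 2 = (1 - (p : ℝ)⁻¹) * (1 + (p : ℝ)⁻¹) := by ring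
  unfold CC; rw [this]; positivity

lemma vS_nonneg (n A B : ℕ) : 0 ≤ vS p n A B := by
  have := hh_pos (p := p) A
  have := hh_pos (p := p) B
  have := CC_pos (p := p)
  have t0 : 0 < (p : ℝ)⁻¹ := inv_pos.2 p_pos
  unfold vS; positivity

lemma prim_val (n A B m k : ℕ) (hm : m = max A B) (hn : n = m + k) :
    (1 - (p : ℝ)⁻¹) * (1 + (p : ℝ)⁻¹) * uu p n *
      ((p : ℝ) ^ (-(max ((n : ℤ) - A) (n - B))) * bt p ((n : ℤ) - A < n) * bt p ((n : ℤ) - B < n) *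
        bt p (0 < min ((n : ℤ) - A) (n - B))) =
    CC p * (p : ℝ)⁻¹ ^ (3 * n) * hh p A * hh p B * (p : ℝ)⁻¹ ^ m * bt p (0 < k) := by
  have b1 : bt p ((n : ℤ) - A < n) = bt p (0 < A) := by
    unfold bt; congr 1; simp
  have b2 : bt p ((n : ℤ) - B < n) = bt p (0 < B) := by
    unfold bt; congr 1; simp
  have b3 : bt p (0 < min ((n : ℤ) - A) (n - B)) = bt p (0 < k) := by
    unfold bt; congr 1; apply propext; omega
  have h : (p : ℝ) ^ (-(max ((n : ℤ) - A) (n - B))) =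
      (p : ℝ) ^ A * (p : ℝ) ^ B * (p : ℝ)⁻¹ ^ m * (p : ℝ)⁻¹ ^ n := by
    rw [inv_pow, inv_pow, ← zpow_natCast, ← zpow_natCast, ← zpow_natCast, ← zpow_natCast,
      ← _root_.zpow_neg, ← _root_.zpow_neg, ← zpow_add₀ p_ne, ← zpow_add₀ p_ne, ← zpow_add₀ p_ne]
    congr 1; omega
  have h2 : (p : ℝ) ^ (-(2 * (n : ℤ))) = (p : ℝ)⁻¹ ^ (2 * n) := by
    rw [_root_.zpow_neg, inv_pow]; norm_cast
  rw [b1, b2, b3, h, uu, kap, h2, CC, hh, hh]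
  ring

theorem nu8_ST (hp : Odd p) (D : ℚ_[p]) (hD : ‖D‖ = 1) (hDs : ¬ ∃ c, D = c ^ 2) (n A B : ℕ) :
    nu8 p (ST D n (n - A) (n - B)) = ENNReal.ofReal (vS p n A B) := by
  induction n using Nat.strong_induction_on with
  | _ n ih =>
  by_cases h : max A B ≤ n
  swap
  · rw [ST_empty _ _ _ _ (by omega), vS, if_neg h]; simp
  obtain ⟨k, hk⟩ := Nat.exists_eq_add_of_le h
  have t0 : 0 < (p : ℝ)⁻¹ := inv_pos.2 p_pos
  rw [nu8_ST_rec, nu8_X0 hp D hD hDs _ _ _ (by omega) (by omega) (by omega) (by omega),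
    prim_val n A B _ k rfl hk]
  have hA := hh_pos (p := p) A
  have hB := hh_pos (p := p) B
  have hC := CC_pos (p := p)
  have hb := bt_pos (p := p) (0 < k)
  rw [vS, if_pos h]
  have hs : n - max A B = k := by omega
  rw [hs]
  rcases k with _ | _ | k
  · rw [ST_empty _ _ _ _ (by omega)]
    simp [bt]
  · rw [ST_empty _ _ _ _ (by omega)]
    simp [bt, Finset.sum_range_succ]
  · have e : ((n : ℤ) - 2) = ((n - 2 : ℕ) : ℤ) := by omega
    have e1 : ((n : ℤ) - A - 2) = ((n - 2 : ℕ) : ℤ) - A := by omega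
    have e2 : ((n : ℤ) - B - 2) = ((n - 2 : ℕ) : ℤ) - B := by omega
    rw [e, e1, e2, ih (n - 2) (by omega), ← ENNReal.ofReal_mul (by positivity),
      ← ENNReal.ofReal_add (by positivity) (mul_nonneg (by positivity) (vS_nonneg ..))]
    congr 1
    rw [vS, if_pos (by omega)]
    have e3 : n - 2 - max A B + 1 = k + 1 := by omega
    have e4 : 3 * n = 3 * (n - 2) + 6 := by omega
    rw [e3, e4, Finset.sum_range_succ' _ (k + 1 + 1), Finset.sum_range_succ' _ (k + 1)]
    have e5 : ∀ i : ℕ, (p : ℝ)⁻¹ ^ (i + 1 + 1) = (p : ℝ)⁻¹ ^ i * (p : ℝ)⁻¹ ^ 2 := fun i => by ring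
    rw [Finset.sum_congr rfl (fun i _ => e5 i), ← Finset.sum_mul]
    simp only [bt, Nat.succ_pos, if_true, zero_add, pow_zero, pow_one]
    ring

end vol

section transport
variable {p : ℕ} [hpf : Fact p.Prime]

instance matBorel : BorelSpace (Matrix (Fin 2) (Fin 2) ℚ_[p]) :=
  inferInstanceAs (BorelSpace (Fin 2 → Fin 2 → ℚ_[p]))
instance matSC : SecondCountableTopology (Matrix (Fin 2) (Fin 2) ℚ_[p]) :=
  inferInstanceAs (SecondCountableTopology (Fin 2 → Fin 2 → ℚ_[p]))

/-- coordinates -/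
def eV : VV p ≃ₜ+ W8 p where
  toFun v := ((v.1 0 0, v.1 1 0, v.2 0 0, v.1 0 1), (v.2 0 1, v.1 1 1, v.2 1 0, v.2 1 1))
  invFun w := (!![w.1.1, w.1.2.2.2; w.1.2.1, w.2.2.1], !![w.1.2.2.1, w.2.1; w.2.2.2.1, w.2.2.2.2])
  left_inv v := by
    ext i j <;> fin_cases i <;> fin_cases j <;> rfl
  right_inv v := rfl
  map_add' v w := rfl
  continuous_toFun := by fun_prop
  continuous_invFun := by
    refine Continuous.prodMk ?_ ?_ <;>
    · refine continuous_pi fun i => continuous_pi fun j => ?_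
      fin_cases i <;> fin_cases j <;> simp <;> fun_prop

lemma eV_L : eV ⁻¹' (L8 p) =
    {v : VV p | (∀ i j, ‖v.1 i j‖ ≤ 1) ∧ (∀ i j, ‖v.2 i j‖ ≤ 1)} := by
  ext v
  rw [mem_preimage, L8, mem_bx]
  simp only [mem_BB, neg_zero, zpow_zero, mem_ofPred_eq, Fin.forall_fin_two, eV]
  change (‖v.1 0 0‖ ≤ 1 ∧ ‖v.1 1 0‖ ≤ 1 ∧ ‖v.2 0 0‖ ≤ 1 ∧ ‖v.1 0 1‖ ≤ 1) ∧
    (‖v.2 0 1‖ ≤ 1 ∧ ‖v.1 1 1‖ ≤ 1 ∧ ‖v.2 1 0‖ ≤ 1 ∧ ‖v.2 1 1‖ ≤ 1) ↔ _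
  tauto

lemma Pq_eq (v : VV p) : Pq v = PP (eV v) := by
  change _ = PP ((v.1 0 0, v.1 1 0, v.2 0 0, v.1 0 1), (v.2 0 1, v.1 1 1, v.2 1 0, v.2 1 1))
  simp only [Pq, PP, FF1, Matrix.adjugate_fin_two, Matrix.det_fin_two, Matrix.sub_apply,
    Matrix.mul_apply, Fin.sum_univ_two, Matrix.of_apply, Matrix.cons_val', Matrix.cons_val_zero,
    Matrix.cons_val_one, Matrix.cons_val_fin_one]
  ring

lemma F1_eq (v : VV p) : Fmap1 v = FF1 (eV v) := rfl
lemma F2_eq (v : VV p) : Fmap2 v = FF2 (eV v) := rfl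

lemma mu_eV (μ : Measure (VV p)) [μ.IsAddHaarMeasure]
    (hμ : μ {v : VV p | (∀ i j, ‖v.1 i j‖ ≤ 1) ∧ (∀ i j, ‖v.2 i j‖ ≤ 1)} = 1)
    (S : Set (W8 p)) (hS : MeasurableSet S) : μ (eV ⁻¹' S) = nu8 p S :=
  haar_pres μ (nu8 p) eV (L8 p) (bx_meas ..) (by rw [eV_L, hμ]) nu8_L8 S hS

end transport
end ZInt


namespace ZInt

open Set

section series
variable {p : ℕ} [hpf : Fact p.Prime]
set_option linter.unusedSectionVars false

lemma q_ge2 : (2 : ℝ) ≤ p := by exact_mod_cast hpf.out.two_le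

/-- partial sums -/
noncomputable def Ph (p : ℕ) (b : ℕ → ℝ) (M : ℕ) : ℝ := ∑ l ∈ Finset.range (M + 1), hh p l * b l

lemma hh_zero : hh p 0 = 1 := by simp [hh, bt]
lemma hh_succ (l : ℕ) : hh p (l + 1) = (p : ℝ) ^ (l + 1) * (1 + (p : ℝ)⁻¹) := by simp [hh, bt]

lemma hh_le (l : ℕ) : hh p l ≤ 2 * (p : ℝ) ^ l := by
  have h1 : (p : ℝ)⁻¹ ≤ 1 := inv_le_one_of_one_le₀ (by linarith [q_ge2 (p := p)])
  have h2 : 0 < (p : ℝ) ^ l := pow_pos p_pos _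
  unfold hh bt
  split_ifs <;> nlinarith

lemma beta_bd (lam : ℝ) (hlam : |lam| ≤ p + 1) (β : ℕ → ℝ) (hβ0 : β 0 = 1)
    (hβ1 : β 1 = lam / (p + 1)) (hrec : ∀ k : ℕ, p * β (k + 2) - lam * β (k + 1) + β k = 0)
    (l : ℕ) : |β l| ≤ 2 ^ l := by
  have q2 := q_ge2 (p := p)
  induction l using Nat.strong_induction_on with
  | _ l ih =>
    match l with
    | 0 => simp [hβ0]
    | 1 =>
      rw [hβ1, abs_div, abs_of_pos (by linarith : (0:ℝ) < p + 1), pow_one]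
      rw [div_le_iff₀ (by linarith)]; linarith
    | k + 2 =>
      have h0 := ih k (by omega)
      have h1 := ih (k + 1) (by omega)
      have e : (p : ℝ) * β (k + 2) = lam * β (k + 1) - β k := by linarith [hrec k]
      have : (p : ℝ) * |β (k + 2)| ≤ (p + 1) * 2 ^ (k + 1) + 2 ^ k := by
        rw [← abs_of_pos (p_pos (p := p)), ← abs_mul, e, abs_of_pos (p_pos (p := p))]
        refine (abs_sub _ _).trans ?_
        rw [abs_mul]
        gcongr
      have h2 : (0 : ℝ) < 2 ^ k := by positivity
      rw [pow_succ] at this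
      rw [pow_add]
      by_contra hc
      push Not at hc
      have : (p : ℝ) * (2 ^ k * 2 ^ 2) < (p + 1) * (2 ^ k * 2) + 2 ^ k :=
        lt_of_lt_of_le (mul_lt_mul_of_pos_left hc p_pos) this
      nlinarith

lemma Ph_bd (b : ℕ → ℝ) (hb : ∀ l, |b l| ≤ 2 ^ l) (M : ℕ) : |Ph p b M| ≤ 4 * (2 * p) ^ M := by
  have q2 := q_ge2 (p := p)
  have hg : ∀ l, |hh p l * b l| ≤ 2 * (2 * (p : ℝ)) ^ l := fun l => by
    rw [abs_mul, abs_of_pos (hh_pos l), mul_pow]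
    calc _ ≤ (2 * (p : ℝ) ^ l) * 2 ^ l := by gcongr; exacts [hh_le l, hb l]
      _ = _ := by ring
  induction M with
  | zero => have := hg 0; simp [Ph] at this ⊢; linarith
  | succ M ih =>
    rw [Ph, Finset.sum_range_succ]
    refine (abs_add_le _ _).trans ?_
    have h2 := hg (M + 1)
    have h3 : (0:ℝ) < (2 * (p : ℝ)) ^ M := by positivity
    have : |∑ l ∈ Finset.range (M + 1), hh p l * b l| ≤ 4 * (2 * p) ^ M := ih
    rw [pow_succ] at h2 ⊢
    nlinarith

lemma Ph_rec (lam : ℝ) (β : ℕ → ℝ) (hβ0 : β 0 = 1)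
    (hβ1 : β 1 = lam / (p + 1)) (hrec : ∀ k : ℕ, p * β (k + 2) - lam * β (k + 1) + β k = 0)
    (M : ℕ) : Ph p β (M + 2) = lam * Ph p β (M + 1) - p * Ph p β M := by
  have q2 := q_ge2 (p := p)
  have q0 := p_ne (p := p)
  induction M with
  | zero =>
    simp only [Ph, Finset.sum_range_succ, Finset.sum_range_zero, hh_zero, hh_succ, zero_add, hβ0]
    have h2 := hrec 0
    have h3 : ((p : ℝ) + 1) * β 1 = lam := by rw [hβ1]; field_simp
    have h4 : (p : ℝ) * (1 + (p : ℝ)⁻¹) = p + 1 := by field_simp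
    have h5 : (p : ℝ) ^ (1 + 1) * (1 + (p : ℝ)⁻¹) = p * (p + 1) := by field_simp
    rw [h5, pow_one, h4]
    simp only [zero_add, hβ0] at h2
    linear_combination (p + 1) * h2 + h3
  | succ M ih =>
    have e : ∀ k, Ph p β (k + 1) = Ph p β k + hh p (k + 1) * β (k + 1) := fun k => by
      rw [Ph, Finset.sum_range_succ]; rfl
    have h2 := hrec (M + 1)
    have key : hh p (M + 3) * β (M + 3) = lam * (hh p (M + 2) * β (M + 2)) -
        p * (hh p (M + 1) * β (M + 1)) := by
      rw [hh_succ, hh_succ, hh_succ]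
      linear_combination (p : ℝ) ^ (M + 2) * (1 + (p : ℝ)⁻¹) * h2
    rw [e (M + 2)]
    nth_rw 2 [e (M + 1)]
    rw [e M]
    linear_combination ih + key + lam * e M

lemma Ph_zero (β : ℕ → ℝ) (hβ0 : β 0 = 1) : Ph p β 0 = 1 := by simp [Ph, hh_zero, hβ0]
lemma Ph_one (lam : ℝ) (β : ℕ → ℝ) (hβ0 : β 0 = 1)
    (hβ1 : β 1 = lam / (p + 1)) : Ph p β 1 = 1 + lam := by
  have q2 := q_ge2 (p := p)
  have q0 := p_ne (p := p)
  simp only [Ph, Finset.sum_range_succ, Finset.sum_range_zero, hh_zero, hh_succ, zero_add, hβ0, hβ1]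
  field_simp

/-- the terms -/
noncomputable def aa (p : ℕ) (X : ℝ) (b : ℕ → ℝ) (M : ℕ) : ℝ := (X / p) ^ M * Ph p b M ^ 2

lemma aa_summable (X : ℝ) (hX : 0 < X) (hX1 : 4 * p * X < 1) (b : ℕ → ℝ)
    (hb : ∀ l, |b l| ≤ 2 ^ l) : Summable (fun M => ‖aa p X b M‖) := by
  have q0 := p_pos (p := p)
  refine Summable.of_nonneg_of_le (fun _ => norm_nonneg _) (fun M => ?_)
    ((summable_geometric_of_lt_one (by positivity) hX1).mul_left 16)
  rw [aa, Real.norm_eq_abs, abs_mul, abs_of_pos (by positivity), abs_pow]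
  calc _ ≤ (X / p) ^ M * (4 * (2 * p) ^ M) ^ 2 := by gcongr; exact Ph_bd b hb M
    _ = 16 * ((X / p) * (2 * p) ^ 2) ^ M := by
        generalize 2 * (p : ℝ) = z
        rw [mul_pow (X / p), ← pow_mul z, mul_comm 2 M, pow_mul]; ring
    _ = _ := by congr 2; field_simp; ring

lemma aa_tsum (X : ℝ) (hX : 0 < X) (hX1 : 4 * p * X < 1) (lam : ℝ) (hlam : |lam| ≤ p + 1)
    (β : ℕ → ℝ) (hβ0 : β 0 = 1)
    (hβ1 : β 1 = lam / (p + 1)) (hrec : ∀ k : ℕ, p * β (k + 2) - lam * β (k + 1) + β k = 0) :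
    ∑' M, aa p X β M = (1 - ((p : ℝ)⁻¹ * lam ^ 2 - 1) * X + ((p : ℝ)⁻¹ * lam ^ 2 - 1) * X ^ 2
      - X ^ 3)⁻¹ * (1 + (1 + (p : ℝ)⁻¹ + X / p + 2 * (p : ℝ)⁻¹ * lam) * X) := by
  have q2 := q_ge2 (p := p)
  have q0 := p_pos (p := p)
  have hs : Summable (aa p X β) :=
    (aa_summable X hX hX1 β (beta_bd lam hlam β hβ0 hβ1 hrec)).of_norm
  have hX2 : X < 1 := by nlinarith
  have den : 0 < 1 - ((p : ℝ)⁻¹ * lam ^ 2 - 1) * X + ((p : ℝ)⁻¹ * lam ^ 2 - 1) * X ^ 2 - X ^ 3 := by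
    have h1 : lam ^ 2 ≤ (p + 1) ^ 2 := by rw [← sq_abs]; gcongr
    have h2 : (p : ℝ)⁻¹ * lam ^ 2 ≤ 4 * p := by
      rw [inv_mul_le_iff₀ q0]; nlinarith
    have h3 : (p : ℝ)⁻¹ * lam ^ 2 * X < 1 := lt_of_le_of_lt (by gcongr) hX1
    have : 1 - ((p : ℝ)⁻¹ * lam ^ 2 - 1) * X + ((p : ℝ)⁻¹ * lam ^ 2 - 1) * X ^ 2 - X ^ 3 =
      (1 - X) * ((1 - (p : ℝ)⁻¹ * lam ^ 2 * X) + 2 * X + X ^ 2) := by ring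
    rw [this]
    refine mul_pos (by linarith) ?_
    nlinarith
  rw [eq_inv_mul_iff_mul_eq₀ den.ne']
  have s1 := (summable_nat_add_iff 1).2 hs
  have s2 := (summable_nat_add_iff 2).2 hs
  have s3 := (summable_nat_add_iff 3).2 hs
  have t1 := hs.sum_add_tsum_nat_add 1
  have t2 := hs.sum_add_tsum_nat_add 2
  have t3 := hs.sum_add_tsum_nat_add 3
  have R := Ph_rec (p := p) lam β hβ0 hβ1 hrec
  have hr : ∀ M, aa p X β (M + 3) = ((p : ℝ)⁻¹ * lam ^ 2 - 1) * X * aa p X β (M + 2)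
      - ((p : ℝ)⁻¹ * lam ^ 2 - 1) * X ^ 2 * aa p X β (M + 1) + X ^ 3 * aa p X β M := fun M => by
    unfold aa
    rw [show M + 3 = (M + 1) + 2 from rfl, R (M + 1), show M + 1 + 1 = M + 2 from rfl, R M]
    have e1 : ((p : ℝ)⁻¹ * lam ^ 2 - 1) * X = (lam ^ 2 - p) * (X / p) := by field_simp
    have e2 : ((p : ℝ)⁻¹ * lam ^ 2 - 1) * X ^ 2 = p * (lam ^ 2 - p) * (X / p) ^ 2 := by field_simp
    have e3 : X ^ 3 = p ^ 3 * (X / p) ^ 3 := by field_simp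
    rw [e1, e2, e3]
    generalize X / p = x
    ring
  have hsum : ∑' M, aa p X β (M + 3) = ((p : ℝ)⁻¹ * lam ^ 2 - 1) * X * ∑' M, aa p X β (M + 2)
      - ((p : ℝ)⁻¹ * lam ^ 2 - 1) * X ^ 2 * ∑' M, aa p X β (M + 1) + X ^ 3 * ∑' M, aa p X β M := by
    rw [← tsum_mul_left, ← tsum_mul_left, ← tsum_mul_left,
      ← (s2.mul_left _).tsum_sub (s1.mul_left _),
      ← ((s2.mul_left _).sub (s1.mul_left _)).tsum_add (hs.mul_left _)]
    exact tsum_congr hr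
  simp only [Finset.sum_range_succ, Finset.sum_range_zero, zero_add] at t1 t2 t3
  have a0 : aa p X β 0 = 1 := by simp [aa, Ph_zero β hβ0]
  have a1 : aa p X β 1 = X / p * (1 + lam) ^ 2 := by simp [aa, Ph_one lam β hβ0 hβ1]
  have a2 : aa p X β 2 = (X / p) ^ 2 * (lam * (1 + lam) - p) ^ 2 := by
    have := R 0
    rw [zero_add, zero_add, Ph_zero β hβ0, Ph_one lam β hβ0 hβ1] at this
    rw [aa, this]; ring
  rw [a0] at t1 t2 t3
  rw [a1] at t2 t3
  rw [a2] at t3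
  generalize ∑' M, aa p X β (M + 3) = T3 at *
  generalize ∑' M, aa p X β (M + 2) = T2 at *
  generalize ∑' M, aa p X β (M + 1) = T1 at *
  generalize ∑' M, aa p X β M = T at *
  have e1 : T1 = T - 1 := by linarith
  have e2 : T2 = T - (1 + X / p * (1 + lam) ^ 2) := by linarith
  have e3 : T3 = T - (1 + X / p * (1 + lam) ^ 2 + (X / p) ^ 2 * (lam * (1 + lam) - p) ^ 2) := by
    linarith
  rw [e1, e2, e3] at hsum
  have : (p : ℝ) * (p : ℝ)⁻¹ = 1 := mul_inv_cancel₀ q0.ne'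
  have h4 : (1 - ((p : ℝ)⁻¹ * lam ^ 2 - 1) * X + ((p : ℝ)⁻¹ * lam ^ 2 - 1) * X ^ 2 - X ^ 3) * T =
    1 + X / p * (1 + lam) ^ 2 + (X / p) ^ 2 * (lam * (1 + lam) - p) ^ 2
     - ((p : ℝ)⁻¹ * lam ^ 2 - 1) * X * (1 + X / p * (1 + lam) ^ 2)
     + ((p : ℝ)⁻¹ * lam ^ 2 - 1) * X ^ 2 := by linear_combination hsum
  rw [h4]
  field_simp
  ring

/-- summand in the triple sum, with `Y ^ n` in place of the power of the norm -/
noncomputable def gg (p : ℕ) (Y : ℝ) (b : ℕ → ℝ) (t : ℕ × ℕ × ℕ) : ℝ :=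
  vS p t.1 t.2.1 t.2.2 * (b t.2.1 * b t.2.2 * Y ^ t.1)

lemma gg_supp (Y : ℝ) (b : ℕ → ℝ) (n : ℕ) (t : ℕ × ℕ)
    (ht : t ∉ Finset.range (n + 1) ×ˢ Finset.range (n + 1)) : gg p Y b (n, t) = 0 := by
  rw [Finset.mem_product, Finset.mem_range, Finset.mem_range] at ht
  rw [gg, vS, if_neg, zero_mul]
  simp only
  omega

lemma gg_fib_summable (Y : ℝ) (b : ℕ → ℝ) (n : ℕ) : Summable (fun t => gg p Y b (n, t)) :=
  summable_of_ne_finset_zero (s := Finset.range (n + 1) ×ˢ Finset.range (n + 1))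
    (fun t ht => gg_supp Y b n t ht)

lemma gg_fib (X Y : ℝ) (hXY : X = (p : ℝ)⁻¹ ^ 3 * Y) (b : ℕ → ℝ) (n : ℕ) :
    ∑' t, gg p Y b (n, t) =
      CC p * ∑ M ∈ Finset.range (n + 1), aa p X b M * X ^ (n - M) := by
  have q0 := p_ne (p := p)
  rw [tsum_eq_sum (s := Finset.range (n + 1) ×ˢ Finset.range (n + 1))
    (fun t ht => gg_supp Y b n t ht), Finset.sum_product]
  have e1 : ∀ A ∈ Finset.range (n + 1), ∀ B ∈ Finset.range (n + 1), gg p Y b (n, A, B) =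
      CC p * X ^ n * ∑ M ∈ Finset.range (n + 1),
        if A ≤ M ∧ B ≤ M then (p : ℝ)⁻¹ ^ M * ((hh p A * b A) * (hh p B * b B)) else 0 := by
    intro A hA B hB
    rw [Finset.mem_range] at hA hB
    have hm : max A B ≤ n := by omega
    have : ∑ M ∈ Finset.range (n + 1),
        (if A ≤ M ∧ B ≤ M then (p : ℝ)⁻¹ ^ M * ((hh p A * b A) * (hh p B * b B)) else 0) =
        (p : ℝ)⁻¹ ^ (max A B) * (∑ i ∈ Finset.range (n - max A B + 1), (p : ℝ)⁻¹ ^ i) *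
          ((hh p A * b A) * (hh p B * b B)) := by
      have h1 : n + 1 = max A B + (n - max A B + 1) := by omega
      rw [h1, Finset.sum_range_add, Finset.sum_eq_zero, zero_add, Finset.mul_sum,
        Finset.sum_mul]
      · refine Finset.sum_congr rfl fun i _ => ?_
        rw [if_pos (by omega), pow_add]
      · intro i hi
        rw [Finset.mem_range] at hi
        rw [if_neg (by omega)]
    rw [this, gg, vS]
    simp only
    rw [if_pos hm, hXY, mul_pow, ← pow_mul]
    ring
  rw [Finset.sum_congr rfl fun A hA => Finset.sum_congr rfl fun B hB => e1 A hA B hB]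
  simp_rw [← Finset.mul_sum]
  rw [mul_assoc]
  congr 1
  rw [Finset.mul_sum]
  have : ∑ A ∈ Finset.range (n + 1), ∑ B ∈ Finset.range (n + 1), ∑ M ∈ Finset.range (n + 1),
        (if A ≤ M ∧ B ≤ M then (p : ℝ)⁻¹ ^ M * ((hh p A * b A) * (hh p B * b B)) else 0) =
      ∑ M ∈ Finset.range (n + 1), (p : ℝ)⁻¹ ^ M * Ph p b M ^ 2 := by
    rw [Finset.sum_congr rfl fun A _ => Finset.sum_comm, Finset.sum_comm]
    refine Finset.sum_congr rfl fun M hM => ?_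
    rw [Finset.mem_range] at hM
    have hsub : Finset.range (M + 1) ⊆ Finset.range (n + 1) :=
      Finset.range_subset_range.2 (by omega)
    rw [sq, Ph, Finset.sum_mul_sum, Finset.mul_sum]
    rw [← Finset.sum_subset hsub]
    · refine Finset.sum_congr rfl fun A hA => ?_
      rw [Finset.mem_range] at hA
      rw [Finset.mul_sum, ← Finset.sum_subset hsub]
      · refine Finset.sum_congr rfl fun B hB => ?_
        rw [Finset.mem_range] at hB
        rw [if_pos (by omega)]
      · intro B _ hB
        rw [Finset.mem_range] at hB
        rw [if_neg (by omega)]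
    · intro A _ hA
      rw [Finset.mem_range] at hA
      exact Finset.sum_eq_zero fun B _ => by rw [if_neg (by omega)]
  rw [← Finset.mul_sum, this, Finset.mul_sum]
  refine Finset.sum_congr rfl fun M hM => ?_
  rw [Finset.mem_range] at hM
  obtain ⟨k, rfl⟩ := Nat.exists_eq_add_of_le (show M ≤ n by omega)
  rw [aa, Nat.add_sub_cancel_left, div_eq_mul_inv, mul_pow]
  ring

lemma gg_abs (Y : ℝ) (hY : 0 < Y) (b : ℕ → ℝ) (t : ℕ × ℕ × ℕ) :
    ‖gg p Y b t‖ = gg p Y (fun l => |b l|) t := by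
  rw [gg, gg, Real.norm_eq_abs, abs_mul, abs_of_nonneg (vS_nonneg ..), abs_mul, abs_mul,
    abs_of_pos (pow_pos hY _)]

lemma gg_summable (X Y : ℝ) (hXY : X = (p : ℝ)⁻¹ ^ 3 * Y) (hX : 0 < X) (hY : 0 < Y)
    (hX1 : 4 * p * X < 1)
    (b : ℕ → ℝ) (hb : ∀ l, |b l| ≤ 2 ^ l) : Summable (fun t => ‖gg p Y b t‖) := by
  have q2 := q_ge2 (p := p)
  have hX2 : X < 1 := by nlinarith
  have h1 : Summable (fun M => ‖X ^ M‖) := by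
    simp_rw [norm_pow, Real.norm_eq_abs, abs_of_pos hX]
    exact summable_geometric_of_lt_one hX.le hX2
  rw [summable_prod_of_nonneg (fun _ => norm_nonneg _)]
  simp_rw [gg_abs Y hY]
  refine ⟨fun n => gg_fib_summable _ _ _, ?_⟩
  simp_rw [gg_fib X Y hXY]
  refine Summable.mul_left _ ?_
  exact (summable_norm_sum_mul_range_of_summable_norm
    (aa_summable X hX hX1 (fun l => |b l|) (by simpa using hb)) h1).of_norm

lemma gg_tsum (X Y : ℝ) (hXY : X = (p : ℝ)⁻¹ ^ 3 * Y) (hX : 0 < X) (hY : 0 < Y)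
    (hX1 : 4 * p * X < 1) (lam : ℝ) (hlam : |lam| ≤ p + 1)
    (β : ℕ → ℝ) (hβ0 : β 0 = 1)
    (hβ1 : β 1 = lam / (p + 1)) (hrec : ∀ k : ℕ, p * β (k + 2) - lam * β (k + 1) + β k = 0) :
    ∑' t, gg p Y β t = CC p * ((1 - X)⁻¹ *
      ((1 - ((p : ℝ)⁻¹ * lam ^ 2 - 1) * X + ((p : ℝ)⁻¹ * lam ^ 2 - 1) * X ^ 2
      - X ^ 3)⁻¹ * (1 + (1 + (p : ℝ)⁻¹ + X / p + 2 * (p : ℝ)⁻¹ * lam) * X))) := by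
  have q2 := q_ge2 (p := p)
  have hX2 : X < 1 := by nlinarith
  have hb := beta_bd lam hlam β hβ0 hβ1 hrec
  have h1 : Summable (fun M => ‖X ^ M‖) := by
    simp_rw [norm_pow, Real.norm_eq_abs, abs_of_pos hX]
    exact summable_geometric_of_lt_one hX.le hX2
  rw [(gg_summable X Y hXY hX hY hX1 β hb).of_norm.tsum_prod]
  simp_rw [gg_fib X Y hXY]
  rw [tsum_mul_left, ← tsum_mul_tsum_eq_tsum_sum_range_of_summable_norm
    (aa_summable X hX hX1 β hb) h1, aa_tsum X hX hX1 lam hlam β hβ0 hβ1 hrec,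
    tsum_geometric_of_lt_one hX.le hX2]
  ring

end series
end ZInt


namespace ZInt

open Metric Set Function

section fin
variable {p : ℕ} [hpf : Fact p.Prime]

lemma PP_F2 (w : W8 p) : PP w = (FF2 w).2.1 ^ 2 - 4 * (FF2 w).1 * (FF2 w).2.2 := by
  unfold PP FF1 FF2; ring

lemma mcoord_cases (t : ℚ_[p] × ℚ_[p] × ℚ_[p]) :
    mcoord t = ‖t.1‖ ∨ mcoord t = ‖t.2.1‖ ∨ mcoord t = ‖t.2.2‖ := by
  unfold mcoord
  rcases max_choice (max ‖t.1‖ ‖t.2.1‖) ‖t.2.2‖ with h | h <;> rw [h]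
  · rcases max_choice ‖t.1‖ ‖t.2.1‖ with h | h <;> rw [h] <;> simp
  · simp

lemma mcoord_pow (t : ℚ_[p] × ℚ_[p] × ℚ_[p]) (h : mcoord t ≠ 0) :
    ∃ k : ℤ, mcoord t = (p : ℝ) ^ (-k) := by
  rcases mcoord_cases t with e | e | e <;> rw [e] at h ⊢ <;>
    exact norm_exists (norm_ne_zero_iff.1 h)

lemma disc_le (hp : Odd p) (t : ℚ_[p] × ℚ_[p] × ℚ_[p]) :
    ‖t.2.1 ^ 2 - 4 * t.1 * t.2.2‖ ≤ mcoord t ^ 2 := by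
  obtain ⟨h1, h2, h3⟩ := mcoord_le.1 (le_refl (mcoord t))
  have h0 : 0 ≤ mcoord t := (norm_nonneg _).trans h1
  have h4 := four_norm hp
  rw [sub_eq_add_neg]
  refine (Padic.nonarchimedean _ _).trans (max_le ?_ ?_)
  · rw [norm_pow]; gcongr
  · rw [norm_neg, norm_mul, norm_mul, h4, one_mul, sq]; gcongr

lemma level_exists (hp : Odd p) (t : ℚ_[p] × ℚ_[p] × ℚ_[p]) (D c : ℚ_[p]) (hD : ‖D‖ = 1) (n : ℤ)
    (hc : ‖c‖ = (p : ℝ) ^ (-n)) (h : t.2.1 ^ 2 - 4 * t.1 * t.2.2 = D * c ^ 2) :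
    ∃ α : ℤ, α ≤ n ∧ mcoord t = (p : ℝ) ^ (-α) := by
  have h1 := disc_le hp t
  rw [h, norm_mul, hD, one_mul, norm_pow, hc] at h1
  have h0 : 0 ≤ mcoord t := (norm_nonneg _).trans (mcoord_le.1 (le_refl (mcoord t))).1
  have h2 := (pow_le_pow_iff_left₀ (zpow_pos p_pos _).le h0 two_ne_zero).1 h1
  obtain ⟨α, hα⟩ := mcoord_pow t (lt_of_lt_of_le (zpow_pos p_pos _) h2).ne'
  exact ⟨α, by rw [hα, zle] at h2; exact h2, hα⟩

/-- pieces -/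
def UU (D : ℚ_[p]) (t : ℕ × ℕ × ℕ) : Set (VV p) :=
  eV ⁻¹' (ST D t.1 (t.1 - t.2.1) (t.1 - t.2.2))

lemma UU_meas (D : ℚ_[p]) (t : ℕ × ℕ × ℕ) : MeasurableSet (UU D t) :=
  (eV (p := p)).continuous.measurable (ST_meas ..)

lemma Vd_eq (hp : Odd p) (d : ℤ_[p]) (hD : ‖(d : ℚ_[p])‖ = 1) : Vd p d = ⋃ t, UU (d : ℚ_[p]) t := by
  ext v
  have hL : ((∀ i j, ‖v.1 i j‖ ≤ 1) ∧ (∀ i j, ‖v.2 i j‖ ≤ 1)) ↔ eV v ∈ L8 p := by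
    have h := congrArg (fun S => v ∈ S) (eV_L (p := p))
    exact (iff_of_eq h).symm
  rw [mem_iUnion]
  constructor
  · rintro ⟨h1, h2, c, hc, hP⟩
    rw [Pq_eq] at hP
    have hw := hL.1 ⟨h1, h2⟩
    obtain ⟨n, hn⟩ := norm_exists hc
    obtain ⟨α, ha, hα⟩ := level_exists hp (FF1 (eV v)) d c hD n hn hP
    obtain ⟨β, hb, hβ⟩ := level_exists hp (FF2 (eV v)) d c hD n hn (by rw [← PP_F2]; exact hP)
    have hm : eV v ∈ ST (d : ℚ_[p]) n α β := ⟨⟨⟨c, hn, hP⟩, hα, hβ⟩, hw⟩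
    have hα0 : 0 ≤ α ∧ 0 ≤ β := by
      by_contra hcon
      have := ST_empty (d : ℚ_[p]) n α β (by omega)
      rw [this] at hm
      exact hm
    refine ⟨(n.toNat, (n - α).toNat, (n - β).toNat), ?_⟩
    change eV v ∈ ST _ _ _ _
    have e1 : ((n.toNat : ℕ) : ℤ) = n := by omega
    have e2 : (((n - α).toNat : ℕ) : ℤ) = n - α := by omega
    have e3 : (((n - β).toNat : ℕ) : ℤ) = n - β := by omega
    simp only [e1, e2, e3, sub_sub_cancel]
    exact hm
  · rintro ⟨t, ⟨⟨c, hn, hP⟩, -, -⟩, hw⟩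
    obtain ⟨h1, h2⟩ := hL.2 hw
    refine ⟨h1, h2, c, ?_, by rw [Pq_eq]; exact hP⟩
    rw [← norm_ne_zero_iff, hn]
    exact (zpow_pos p_pos _).ne'

lemma UU_norm (D : ℚ_[p]) (hD : ‖D‖ = 1) (t : ℕ × ℕ × ℕ) (v : VV p) (hv : v ∈ UU D t) :
    ‖Pq v‖ = ((p : ℝ) ^ (-(t.1 : ℤ))) ^ 2 ∧
    mcoord (Fmap1 v) = (p : ℝ) ^ (-((t.1 : ℤ) - t.2.1)) ∧
    mcoord (Fmap2 v) = (p : ℝ) ^ (-((t.1 : ℤ) - t.2.2)) := by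
  obtain ⟨⟨⟨c, hn, hP⟩, h1, h2⟩, -⟩ := hv
  refine ⟨?_, h1, h2⟩
  rw [Pq_eq, hP, norm_mul, hD, one_mul, norm_pow, hn]

lemma UU_disj (D : ℚ_[p]) (hD : ‖D‖ = 1) : Pairwise (Disjoint on UU D) := by
  rintro ⟨n, A, B⟩ ⟨n', A', B'⟩ hne
  rw [onFun, Set.disjoint_left]
  intro v hv hv'
  obtain ⟨h1, h2, h3⟩ := UU_norm D hD _ v hv
  obtain ⟨h1', h2', h3'⟩ := UU_norm D hD _ v hv'
  rw [h1, pow_left_inj₀ (zpow_pos p_pos _).le (zpow_pos p_pos _).le two_ne_zero, zeq] at h1'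
  rw [h2, zeq] at h2'
  rw [h3, zeq] at h3'
  simp only at h1' h2' h3'
  apply hne
  have a : n = n' := by omega
  have b : A = A' := by omega
  have c : B = B' := by omega
  rw [a, b, c]

lemma level_iff (n A : ℕ) (l : ℕ) : 1 * ((p : ℝ) ^ (-((n : ℤ) - A))) ^ 2 =
    ((p : ℝ) ^ (-(n : ℤ))) ^ 2 * (p : ℝ) ^ (2 * l) ↔ l = A := by
  have e : ((p : ℝ) ^ (-(n : ℤ))) ^ 2 * (p : ℝ) ^ (2 * l) = ((p : ℝ) ^ (-((n : ℤ) - l))) ^ 2 := by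
    rw [mul_comm 2 l, pow_mul, ← mul_pow, ← zpow_natCast (p : ℝ) l, ← zpow_add₀ p_ne]
    congr 2; ring
  rw [e, one_mul, pow_left_inj₀ (zpow_pos p_pos _).le (zpow_pos p_pos _).le two_ne_zero, zeq]
  omega

lemma fs_UU (d : ℤ_[p]) (hD : ‖(d : ℚ_[p])‖ = 1) (β : ℕ → ℝ) (s : ℝ) (t : ℕ × ℕ × ℕ) (v : VV p)
    (hv : v ∈ UU (d : ℚ_[p]) t) :
    fs p d β s v = β t.2.1 * β t.2.2 * ((p : ℝ) ^ (-(2 * (s - 2)))) ^ t.1 := by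
  obtain ⟨h1, h2, h3⟩ := UU_norm _ hD _ v hv
  have L1 : ∀ l : ℕ, ‖(d : ℚ_[p])‖ * mcoord (Fmap1 v) ^ 2 = ‖Pq v‖ * (p : ℝ) ^ (2 * l) ↔
      l = t.2.1 := fun l => by rw [hD, h1, h2]; exact level_iff _ _ _
  have L2 : ∀ l : ℕ, ‖(d : ℚ_[p])‖ * mcoord (Fmap2 v) ^ 2 = ‖Pq v‖ * (p : ℝ) ^ (2 * l) ↔
      l = t.2.2 := fun l => by rw [hD, h1, h3]; exact level_iff _ _ _
  have h0 : Pq v ≠ 0 := by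
    rw [← norm_ne_zero_iff, h1]; exact (pow_pos (zpow_pos p_pos _) _).ne'
  have hc : Pq v ≠ 0 ∧
      (∃ l : ℕ, ‖(d : ℚ_[p])‖ * mcoord (Fmap1 v) ^ 2 = ‖Pq v‖ * (p : ℝ) ^ (2 * l)) ∧
      (∃ l : ℕ, ‖(d : ℚ_[p])‖ * mcoord (Fmap2 v) ^ 2 = ‖Pq v‖ * (p : ℝ) ^ (2 * l)) :=
    ⟨h0, ⟨_, (L1 _).2 rfl⟩, ⟨_, (L2 _).2 rfl⟩⟩
  rw [fs, dif_pos hc, (L1 _).1 hc.2.1.choose_spec, (L2 _).1 hc.2.2.choose_spec, h1]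
  congr 1
  rw [← Real.rpow_intCast, ← Real.rpow_natCast, ← Real.rpow_natCast, ← Real.rpow_mul p_pos.le,
    ← Real.rpow_mul p_pos.le, ← Real.rpow_mul p_pos.le]
  congr 1
  push_cast
  ring

lemma UU_mu (hp : Odd p) (d : ℤ_[p]) (hD : ‖(d : ℚ_[p])‖ = 1)
    (hDs : ¬ ∃ c : ℚ_[p], (d : ℚ_[p]) = c ^ 2) (μ : Measure (VV p)) [μ.IsAddHaarMeasure]
    (hμ : μ {v : VV p | (∀ i j, ‖v.1 i j‖ ≤ 1) ∧ (∀ i j, ‖v.2 i j‖ ≤ 1)} = 1) (t : ℕ × ℕ × ℕ) :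
    μ (UU (d : ℚ_[p]) t) = ENNReal.ofReal (vS p t.1 t.2.1 t.2.2) := by
  rw [UU, mu_eV μ hμ _ (ST_meas ..), nu8_ST hp _ hD hDs]

theorem main_int (hp : Odd p) (lam : ℝ) (hlam : |lam| ≤ p + 1)
    (d : ℤ_[p]) (hD : ‖(d : ℚ_[p])‖ = 1) (hDs : ¬ ∃ c : ℚ_[p], (d : ℚ_[p]) = c ^ 2)
    (β : ℕ → ℝ) (hβ0 : β 0 = 1) (hβ1 : β 1 = lam / (p + 1))
    (hrec : ∀ k : ℕ, p * β (k + 2) - lam * β (k + 1) + β k = 0)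
    (μ : Measure (VV p)) [μ.IsAddHaarMeasure]
    (hμ : μ {v : VV p | (∀ i j, ‖v.1 i j‖ ≤ 1) ∧ (∀ i j, ‖v.2 i j‖ ≤ 1)} = 1)
    (s : ℝ) (hs : 3 < s) :
    IntegrableOn (fs p d β s) (Vd p d) μ ∧
      ∫ v in Vd p d, fs p d β s v ∂μ = CC p * ((1 - (p : ℝ) ^ (1 - 2 * s))⁻¹ *
      ((1 - ((p : ℝ)⁻¹ * lam ^ 2 - 1) * (p : ℝ) ^ (1 - 2 * s) +
      ((p : ℝ)⁻¹ * lam ^ 2 - 1) * ((p : ℝ) ^ (1 - 2 * s)) ^ 2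
      - ((p : ℝ) ^ (1 - 2 * s)) ^ 3)⁻¹ *
      (1 + (1 + (p : ℝ)⁻¹ + ((p : ℝ) ^ (1 - 2 * s)) / p + 2 * (p : ℝ)⁻¹ * lam) *
        (p : ℝ) ^ (1 - 2 * s)))) := by
  have q2 := q_ge2 (p := p)
  set X : ℝ := (p : ℝ) ^ (1 - 2 * s) with hXd
  set Y : ℝ := (p : ℝ) ^ (-(2 * (s - 2))) with hYd
  have hX : 0 < X := Real.rpow_pos_of_pos p_pos _
  have hY : 0 < Y := Real.rpow_pos_of_pos p_pos _
  have hXY : X = (p : ℝ)⁻¹ ^ 3 * Y := by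
    have : (p : ℝ)⁻¹ ^ 3 = (p : ℝ) ^ (-3 : ℝ) := by
      rw [Real.rpow_neg p_pos.le, inv_pow]; norm_cast
    rw [this, hYd, hXd, ← Real.rpow_add p_pos]; congr 1; ring
  have hX1 : 4 * p * X < 1 := by
    have h1 : X < (p : ℝ) ^ (-3 : ℝ) :=
      Real.rpow_lt_rpow_of_exponent_lt (by linarith) (by linarith)
    have h2 : (p : ℝ) ^ (-3 : ℝ) = ((p : ℝ) ^ 3)⁻¹ := by
      rw [Real.rpow_neg p_pos.le]; norm_cast
    rw [h2] at h1
    have h3 : 0 < (p : ℝ) ^ 3 := pow_pos p_pos _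
    have h4 : (p : ℝ) ^ 3 * X < 1 := by
      rw [← mul_inv_cancel₀ h3.ne']; gcongr
    have h5 : 4 * (p : ℝ) ≤ p ^ 3 := by nlinarith [mul_le_mul q2 q2 (by norm_num) p_pos.le]
    exact lt_of_le_of_lt (by gcongr) h4
  have hintg : ∀ t, IntegrableOn (fs p d β s) (UU (d : ℚ_[p]) t) μ := fun t => by
    refine (integrableOn_congr_fun (g := fun _ => β t.2.1 * β t.2.2 * Y ^ t.1)
      (fun v hv => fs_UU d hD β s t v hv) (UU_meas _ _)).2 ?_
    rw [integrableOn_const_iff]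
    right
    rw [UU_mu hp d hD hDs μ hμ]
    exact ENNReal.ofReal_lt_top
  have hval : ∀ t, ∫ v in UU (d : ℚ_[p]) t, fs p d β s v ∂μ = gg p Y β t := fun t => by
    rw [setIntegral_congr_fun (UU_meas _ _) (fun v hv => fs_UU d hD β s t v hv),
      setIntegral_const, Measure.real, UU_mu hp d hD hDs μ hμ,
      ENNReal.toReal_ofReal (vS_nonneg ..), smul_eq_mul]
    rfl
  have hvaln : ∀ t, ∫ v in UU (d : ℚ_[p]) t, ‖fs p d β s v‖ ∂μ = ‖gg p Y β t‖ := fun t => by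
    rw [setIntegral_congr_fun (g := fun _ => ‖β t.2.1 * β t.2.2 * Y ^ t.1‖) (UU_meas _ _)
      (fun v hv => by simp only; rw [fs_UU d hD β s t v hv]),
      setIntegral_const, Measure.real, UU_mu hp d hD hDs μ hμ,
      ENNReal.toReal_ofReal (vS_nonneg ..), smul_eq_mul, gg, norm_mul (vS _ _ _ _),
      Real.norm_of_nonneg (vS_nonneg ..)]
  have hsum := gg_summable X Y hXY hX hY hX1 β (beta_bd lam hlam β hβ0 hβ1 hrec)
  have hI : IntegrableOn (fs p d β s) (Vd p d) μ := by
    rw [Vd_eq hp d hD]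
    refine integrableOn_iUnion_of_summable_integral_norm hintg ?_
    simp_rw [hvaln]
    exact hsum
  refine ⟨hI, ?_⟩
  rw [Vd_eq hp d hD] at hI ⊢
  rw [integral_iUnion (UU_meas _) (UU_disj _ hD) hI]
  simp_rw [hval]
  exact gg_tsum X Y hXY hX hY hX1 lam hlam β hβ0 hβ1 hrec

end fin
end ZInt


/-- the inert unramified case (`d ∈ ℤ_pˣ` a nonsquare in `ℚ_p`): explicit
value of the local zeta integral `∫_{V_d(ℤ_p)} f_s`. -/
theorem stmt18 (p : ℕ) [Fact p.Prime] (hp : Odd p) (q lam : ℝ) (hq : q = p)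
    (hlam : |lam| ≤ q + 1)
    (d : ℤ_[p]) (hdval : ‖(d : ℚ_[p])‖ = 1 ∨ ‖(d : ℚ_[p])‖ = (p : ℝ)⁻¹)
    (hd : IsUnit d ∧ ¬ ∃ c : ℚ_[p], (d : ℚ_[p]) = c ^ 2)
    (β : ℕ → ℝ) (hβ0 : β 0 = 1) (hβ1 : β 1 = lam / (q + 1))
    (hrec : ∀ k : ℕ, q * β (k + 2) - lam * β (k + 1) + β k = 0)
    (μ : Measure (VV p)) [μ.IsAddHaarMeasure]
    (hμ : μ {v : VV p | (∀ i j, ‖v.1 i j‖ ≤ 1) ∧ (∀ i j, ‖v.2 i j‖ ≤ 1)} = 1) :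
    ∃ s₀ : ℝ, ∀ s : ℝ, s₀ < s →
      IntegrableOn (fs p d β s) (Vd p d) μ ∧
      ∫ v in Vd p d, fs p d β s v ∂μ =
        (1 / 2) * ((1 + q⁻¹)⁻¹) ^ 2 * (1 - q⁻¹) * (1 - q⁻¹ ^ 2) ^ 3 *
          (1 - q ^ (1 - 2 * s))⁻¹ *
          (1 - (q⁻¹ * lam ^ 2 - 1) * q ^ (1 - 2 * s) +
              (q⁻¹ * lam ^ 2 - 1) * q ^ (2 - 4 * s) - q ^ (3 - 6 * s))⁻¹ *
          (1 + (1 + q⁻¹ + q ^ (-(2 * s)) + 2 * q⁻¹ * lam) * q ^ (1 - 2 * s)) := by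
  subst hq
  have hD : ‖(d : ℚ_[p])‖ = 1 := by
    have := PadicInt.isUnit_iff.1 hd.1
    simpa using this
  refine ⟨3, fun s hs => ?_⟩
  obtain ⟨h1, h2⟩ := ZInt.main_int hp lam hlam d hD hd.2 β hβ0 hβ1 hrec μ hμ s hs
  refine ⟨h1, ?_⟩
  have q0 : (0 : ℝ) < p := ZInt.p_pos
  rw [h2]
  have e1 : (p : ℝ) ^ (2 - 4 * s) = ((p : ℝ) ^ (1 - 2 * s)) ^ 2 := by
    rw [← Real.rpow_natCast, ← Real.rpow_mul q0.le]; congr 1; push_cast; ring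
  have e2 : (p : ℝ) ^ (3 - 6 * s) = ((p : ℝ) ^ (1 - 2 * s)) ^ 3 := by
    rw [← Real.rpow_natCast, ← Real.rpow_mul q0.le]; congr 1; push_cast; ring
  have e3 : (p : ℝ) ^ (-(2 * s)) = (p : ℝ) ^ (1 - 2 * s) / p := by
    rw [eq_div_iff q0.ne']
    nth_rw 2 [← Real.rpow_one (p : ℝ)]
    rw [← Real.rpow_add q0]; congr 1; ring
  have e4 : ZInt.CC p = (1 / 2) * ((1 + (p : ℝ)⁻¹)⁻¹) ^ 2 * (1 - (p : ℝ)⁻¹) *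
      (1 - (p : ℝ)⁻¹ ^ 2) ^ 3 := by
    have h : 0 < 1 + (p : ℝ)⁻¹ := by positivity
    have f : 1 - (p : ℝ)⁻¹ ^ 2 = (1 - (p : ℝ)⁻¹) * (1 + (p : ℝ)⁻¹) := by ring
    rw [ZInt.CC, f]
    generalize (p : ℝ)⁻¹ = x at *
    field_simp
  rw [e1, e2, e3, e4]
  ring
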